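/- arXiv:2212.14792 — 2 statements merged into one kernel-verified Lean document; each statement's English description precedes it below -/
import Mathlib

section
/- Let Γ be a non-bipartite graph. If depth R/I = 1, then depth R/I^2 = 0, i.e., the maximal graded ideal m is an associated prime of R/I^2. -/
open MvPolynomial

noncomputable section

/-- The edge ideal of a graph `Γ` on vertex set `σ`, in `k[x_i : i ∈ σ]`. -/
def edgeIdeal (k : Type) [Field k] {σ : Type} (Γ : SimpleGraph σ) :
    Ideal (MvPolynomial σ k) :=
  Ideal.span { m | ∃ i j : σ, Γ.Adj i j ∧ m = X i * X j }

/-- The maximal graded ideal `(x_i : i ∈ σ)` of `k[x_i : i ∈ σ]`. -/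
def maxIdeal (k : Type) [Field k] (σ : Type) : Ideal (MvPolynomial σ k) :=
  Ideal.span (Set.range (X : σ → MvPolynomial σ k))

/-- `depth R/J = 0`, i.e. the maximal graded ideal is an associated prime of `R/J`. -/
def DepthZero (k : Type) [Field k] {σ : Type} (J : Ideal (MvPolynomial σ k)) : Prop :=
  maxIdeal k σ ∈ associatedPrimes (MvPolynomial σ k) (MvPolynomial σ k ⧸ J)

/-- The `i`-th local cohomology of `R/J` with support in the maximal graded ideal. -/
def locCoh (k : Type) [Field k] {σ : Type} (J : Ideal (MvPolynomial σ k)) (i : ℕ) :=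
  (localCohomology (maxIdeal k σ) i).obj (ModuleCat.of _ (MvPolynomial σ k ⧸ J))

/-- `depth R/J`, defined as the least `i` with `H^i_m(R/J) ≠ 0`. -/
def rDepth (k : Type) [Field k] {σ : Type} (J : Ideal (MvPolynomial σ k)) : ℕ :=
  sInf { i | Nontrivial (locCoh k J i) }

/-- A set `U` of vertices is dominating: every vertex outside `U` is adjacent to a
vertex of `U`. -/
def Dominating {σ : Type} (Γ : SimpleGraph σ) (U : Set σ) : Prop :=
  ∀ v ∉ U, ∃ u ∈ U, Γ.Adj u v

/-- The closed neighborhood `N[v]` of a vertex. -/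
def closedNbhd {σ : Type} (Γ : SimpleGraph σ) (v : σ) : Set σ :=
  insert v { u | Γ.Adj v u }

/-- The closed neighborhood `N[C]` of a set of vertices. -/
def closedNbhdSet {σ : Type} (Γ : SimpleGraph σ) (C : Set σ) : Set σ :=
  ⋃ v ∈ C, closedNbhd Γ v

/-- An odd cycle of length `m` (given as an injective map `ZMod m → σ` with consecutive
vertices adjacent) in `Γ`. -/
def IsOddCycle {σ : Type} (Γ : SimpleGraph σ) (m : ℕ) (c : ZMod m → σ) : Prop :=
  Odd m ∧ 3 ≤ m ∧ Function.Injective c ∧ ∀ i, Γ.Adj (c i) (c (i + 1))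

/-- `F` is an independent set of `Γ`. -/
def IsIndep {σ : Type} [Fintype σ] [DecidableEq σ] (Γ : SimpleGraph σ) (F : Finset σ) : Prop :=
  ∀ i ∈ F, ∀ j ∈ F, ¬ Γ.Adj i j

/-- `F` is a maximal independent set of `Γ`. -/
def IsMaxIndep {σ : Type} [Fintype σ] [DecidableEq σ] (Γ : SimpleGraph σ) (F : Finset σ) : Prop :=
  IsIndep Γ F ∧ ∀ G : Finset σ, IsIndep Γ G → F ⊆ G → G = F

/-- The prime ideal `P_F = (x_i : i ∉ F)`. -/
def PF (k : Type) [Field k] {σ : Type} [Fintype σ] [DecidableEq σ] (F : Finset σ) :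
    Ideal (MvPolynomial σ k) :=
  Ideal.span { m | ∃ i ∉ F, m = X i }

/-- The `t`-th symbolic power `I^{(t)} = ⋂_{F maximal independent} P_F^t` of the edge ideal. -/
def symbPow (k : Type) [Field k] {σ : Type} [Fintype σ] [DecidableEq σ]
    (Γ : SimpleGraph σ) (t : ℕ) : Ideal (MvPolynomial σ k) :=
  ⨅ F ∈ { F : Finset σ | IsMaxIndep Γ F }, PF k F ^ t

/-- The monomial `x^a`. -/
def xPow (k : Type) [Field k] {σ : Type} [Fintype σ] (a : σ → ℕ) : MvPolynomial σ k :=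
  ∏ i, X i ^ a i

/-- The localization `R[x_i^{-1} : i ∈ F]`. -/
abbrev locAt (k : Type) [Field k] {σ : Type} (F : Finset σ) :=
  Localization (Submonoid.closure ((fun i => (X i : MvPolynomial σ k)) '' (F : Set σ)))

/-- The degree complex `Δ_a(J) = {F : x^a ∉ J·R[x_i^{-1} : i ∈ F]}` of a monomial ideal `J`. -/
def degComplex (k : Type) [Field k] {σ : Type} [Fintype σ] (J : Ideal (MvPolynomial σ k))
    (a : σ → ℕ) : Set (Finset σ) :=
  { F | algebraMap (MvPolynomial σ k) (locAt k F) (xPow k a) ∉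
      J.map (algebraMap (MvPolynomial σ k) (locAt k F)) }

/-- `F` is a facet (maximal face) of the complex `Δ`. -/
def IsFacet {σ : Type} (Δ : Set (Finset σ)) (F : Finset σ) : Prop :=
  F ∈ Δ ∧ ∀ G ∈ Δ, F ⊆ G → G = F

/-- The complex `Δ` is disconnected: its vertex set splits into two nonempty parts such that
no face meets both. -/
def ComplexDisconnected {σ : Type} (Δ : Set (Finset σ)) : Prop :=
  ∃ A B : Set σ, A.Nonempty ∧ B.Nonempty ∧ Disjoint A B ∧
    (∀ i, {i} ∈ Δ ↔ i ∈ A ∪ B) ∧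
    ∀ F ∈ Δ, ¬ ((∃ i ∈ F, i ∈ A) ∧ (∃ j ∈ F, j ∈ B))

/-- The polynomial ring `R_v = k[x_i : i ≠ v]`. -/
abbrev Rv (k : Type) [Field k] {σ : Type} (v : σ) := MvPolynomial { i : σ // i ≠ v } k

/-- The localization `R[x_v^{-1}]`. -/
abbrev LocAway (k : Type) [Field k] {σ : Type} (v : σ) :=
  Localization.Away (X v : MvPolynomial σ k)

/-- For an ideal `I` of `R`, the ideal `I_v = I·R[x_v^{-1}] ∩ R_v` of `R_v`. -/
def idealV (k : Type) [Field k] {σ : Type} (I : Ideal (MvPolynomial σ k)) (v : σ) :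
    Ideal (Rv k v) :=
  Ideal.comap ((algebraMap (MvPolynomial σ k) (LocAway k v)).comp
      (MvPolynomial.rename (Subtype.val : { i : σ // i ≠ v } → σ)).toRingHom)
    (I.map (algebraMap (MvPolynomial σ k) (LocAway k v)))

/-- The edge ideal of the induced subgraph `Γ_U` in `k[x_i : i ∈ U]`. -/
def edgeIdealOn (k : Type) [Field k] {σ : Type} (Γ : SimpleGraph σ) (U : Set σ) :
    Ideal (MvPolynomial U k) :=
  Ideal.span { m | ∃ i j : U, Γ.Adj (i : σ) (j : σ) ∧ m = X i * X j }

/-- `Γ` has no isolated vertices. -/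
def NoIsolated {σ : Type} (Γ : SimpleGraph σ) : Prop :=
  ∀ v : σ, ∃ u : σ, Γ.Adj v u

/-!
If the complement of `Γ` is disconnected, then `Γ` is a join of two nonempty graphs on `A` and
`Aᶜ`. Since `Γ` is not bipartite, one of the two sides, say `A`, contains an edge `xy`, and for
any `w ∉ A` the monomial `f = x y w` satisfies `x_i f ∈ I²` for every `i`: group `x_i f` as
`(x_i w)(x y)` for `i ∈ A` and as `(x x_i)(y w)` otherwise. As `I²` lives in degrees at least `4`,
`f ∉ I²`, so `m` is the annihilator of `f` in `R/I²`.

If the complement of `Γ` is connected, then `H¹_m(R/I) = 0`. Indeed `Ext¹(R/mᵗ, R/I) = 0` as soon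
as every homomorphism `φ : mᵗ → R/I` is multiplication by some `g`. The monomials with independent
support form a basis of `R/I`; comparing coefficients in `x_jˢ φ(x_iˢ) = x_iˢ φ(x_jˢ)` for
`s = t + 1` shows that `φ(x_iˢ)` is divisible by `x_iˢ` and that the quotients agree on all
monomials where they can be compared. They glue to one `g`, the constant coefficients being
compared along paths of non-edges of `Γ`.
-/

section Extension

variable {R M : Type*} [CommRing R] [AddCommGroup M] [Module R M]

lemma exists_comp_eq_of_ker_le_ker {A B : Type*} [AddCommGroup A] [AddCommGroup B]
    [Module R A] [Module R B] {d : A →ₗ[R] B} (hd : Function.Surjective d) {f : A →ₗ[R] M}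
    (h : LinearMap.ker d ≤ LinearMap.ker f) : ∃ ψ : B →ₗ[R] M, ψ ∘ₗ d = f := by
  refine ⟨(LinearMap.ker d).liftQ f h ∘ₗ (d.quotKerEquivOfSurjective hd).symm, ?_⟩
  ext x
  have hx : (d.quotKerEquivOfSurjective hd).symm (d x) = Submodule.Quotient.mk x :=
    (LinearEquiv.symm_apply_eq _).2 rfl
  simp only [LinearMap.comp_apply, LinearEquiv.coe_coe, hx, Submodule.liftQ_apply]

/- If `p : P → Q` and `e : Q → P` are maps over `N`, then `x - e (p x)` lies in `ker π`, and
`x ↦ ψ (x - e (p x)) + g (p x)` extends `ψ` as soon as `g` extends `ψ ∘ e`. -/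
lemma exists_extension_ker_of_projective {P Q N : Type*} [AddCommGroup P] [AddCommGroup Q]
    [AddCommGroup N] [Module R P] [Module R Q] [Module R N] [Module.Projective R P]
    [Module.Projective R Q] {π : P →ₗ[R] N} (hπ : Function.Surjective π) {ρ : Q →ₗ[R] N}
    (hρ : Function.Surjective ρ)
    (hext : ∀ φ : LinearMap.ker ρ →ₗ[R] M, ∃ g : Q →ₗ[R] M, g.domRestrict (LinearMap.ker ρ) = φ)
    (ψ : LinearMap.ker π →ₗ[R] M) :
    ∃ g : P →ₗ[R] M, g.domRestrict (LinearMap.ker π) = ψ := by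
  obtain ⟨p, hp⟩ := Module.projective_lifting_property ρ π hρ
  obtain ⟨e, he⟩ := Module.projective_lifting_property π ρ hπ
  replace hp (x) : ρ (p x) = π x := LinearMap.congr_fun hp x
  replace he (x) : π (e x) = ρ x := LinearMap.congr_fun he x
  let eKer : LinearMap.ker ρ →ₗ[R] LinearMap.ker π :=
    e.restrict fun x hx => by rwa [LinearMap.mem_ker, he]
  let pKer : LinearMap.ker π →ₗ[R] LinearMap.ker ρ :=
    p.restrict fun x hx => by rwa [LinearMap.mem_ker, hp]
  let toKer : P →ₗ[R] LinearMap.ker π :=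
    (LinearMap.id - e ∘ₗ p).codRestrict _ fun x => by simp [he, hp]
  obtain ⟨g, hg⟩ := hext (ψ ∘ₗ eKer)
  refine ⟨ψ ∘ₗ toKer + g ∘ₗ p, LinearMap.ext fun x => ?_⟩
  have htoKer : toKer x = x - eKer (pKer x) := rfl
  have hgp : g (p x) = ψ (eKer (pKer x)) := LinearMap.congr_fun hg (pKer x)
  simp only [LinearMap.domRestrict_apply, LinearMap.add_apply, LinearMap.comp_apply, htoKer,
    hgp, map_sub, sub_add_cancel]

lemma exists_extension_of_compatible {ι : Type*} {J : Ideal R} (y : ι → J)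
    (hfaithful : ∀ z : M, (∀ i, (y i : R) • z = 0) → z = 0)
    (hglue : ∀ F : ι → M, (∀ i j, (y j : R) • F i = (y i : R) • F j) →
      ∃ g : M, ∀ i, F i = (y i : R) • g)
    (φ : J →ₗ[R] M) : ∃ g : R →ₗ[R] M, g.domRestrict J = φ := by
  have hcomm (p q : J) : (p : R) • φ q = (q : R) • φ p := by
    rw [← map_smul, ← map_smul]
    exact congrArg φ (Subtype.ext (mul_comm _ _))
  obtain ⟨g, hg⟩ := hglue (fun i => φ (y i)) fun i j => hcomm (y j) (y i)
  refine ⟨LinearMap.toSpanSingleton R M g, LinearMap.ext fun p => ?_⟩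
  rw [LinearMap.domRestrict_apply, LinearMap.toSpanSingleton_apply, ← sub_eq_zero]
  refine hfaithful _ fun i => ?_
  rw [smul_sub, hcomm (y i) p, hg, smul_comm, sub_self]

end Extension

section LocalCohomology

open CategoryTheory CategoryTheory.Limits

universe u

variable {R : Type u} [CommRing R] {M : ModuleCat.{u} R}

lemma isZero_Ext_one_of_exists_extension {N : ModuleCat.{u} R} {Q : Type*} [AddCommGroup Q]
    [Module R Q] [Module.Projective R Q] {ρ : Q →ₗ[R] N} (hρ : Function.Surjective ρ)
    (hext : ∀ φ : LinearMap.ker ρ →ₗ[R] M,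
      ∃ g : Q →ₗ[R] M, g.domRestrict (LinearMap.ker ρ) = φ) :
    IsZero (((Ext R (ModuleCat.{u} R) 1).obj (Opposite.op N)).obj M) := by
  let P := ProjectiveResolution.of N
  refine IsZero.of_iso ?_ (P.isoExt 1 M)
  rw [← HomologicalComplex.exactAt_iff_isZero_homology,
    HomologicalComplex.exactAt_iff' _ 0 1 2 (by simp) (by simp),
    ShortComplex.moduleCat_exact_iff]
  intro (f : P.complex.X 1 ⟶ M) (hf : P.complex.d 2 1 ≫ f = 0)
  suffices ∃ F : P.complex.X 0 ⟶ M, P.complex.d 1 0 ≫ F = f from this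
  let π : P.complex.X 0 →ₗ[R] N := (P.π.f 0).hom
  let d : P.complex.X 1 →ₗ[R] P.complex.X 0 := (P.complex.d 1 0).hom
  have hπ : Function.Surjective π :=
    (ModuleCat.epi_iff_surjective _).1 (inferInstanceAs (Epi (P.π.f 0)))
  have : Module.Projective R (P.complex.X 0) :=
    (IsProjective.iff_projective _).2 (inferInstanceAs (Projective (P.complex.X 0)))
  have hπd (y) : d y ∈ LinearMap.ker π :=
    LinearMap.congr_fun (congrArg ModuleCat.Hom.hom P.complex_d_comp_π_f_zero) y
  have hsurj : Function.Surjective (d.codRestrict _ hπd) := fun x =>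
    ((ShortComplex.moduleCat_exact_iff _).1 P.exact₀ x x.2).imp fun _ hy => Subtype.ext hy
  have hker : LinearMap.ker (d.codRestrict _ hπd) ≤ LinearMap.ker f.hom := fun y hy => by
    rw [LinearMap.ker_codRestrict] at hy
    obtain ⟨z, rfl⟩ := (ShortComplex.moduleCat_exact_iff _).1 (P.exact_succ 0) y hy
    exact LinearMap.congr_fun (congrArg ModuleCat.Hom.hom hf) z
  obtain ⟨ψ, hψ⟩ := exists_comp_eq_of_ker_le_ker hsurj hker
  obtain ⟨g, hg⟩ := exists_extension_ker_of_projective hπ hρ hext ψ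
  refine ⟨ModuleCat.ofHom g, ModuleCat.hom_ext (LinearMap.ext fun y => ?_)⟩
  calc g (d y) = ψ (d.codRestrict _ hπd y) := LinearMap.congr_fun hg ⟨d y, hπd y⟩
    _ = f.hom y := LinearMap.congr_fun hψ y

lemma isZero_localCohomology_of_isZero_Ext {J : Ideal R} {i : ℕ}
    (h : ∀ t : ℕ, IsZero (((Ext R (ModuleCat.{u} R) i).obj
      (Opposite.op (ModuleCat.of R (R ⧸ J ^ t)))).obj M)) :
    IsZero ((localCohomology J i).obj M) := by
  have := localCohomology.hasColimitDiagram.{u, 0} (localCohomology.idealPowersDiagram J) i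
  refine IsZero.of_iso ?_ (colimitObjIsoColimitCompEvaluation
    (localCohomology.diagram (localCohomology.idealPowersDiagram J) i) M)
  rw [IsZero.iff_id_eq_zero]
  exact colimit.hom_ext fun t => (h t.unop.unop).eq_of_src _ _

lemma isZero_localCohomology_one_of_exists_extension {J : Ideal R}
    (hext : ∀ t : ℕ, ∀ φ : (J ^ t : Ideal R) →ₗ[R] M,
      ∃ g : R →ₗ[R] M, g.domRestrict (J ^ t) = φ) :
    IsZero ((localCohomology J 1).obj M) := by
  refine isZero_localCohomology_of_isZero_Ext fun t =>
    isZero_Ext_one_of_exists_extension (Submodule.mkQ_surjective (J ^ t)) ?_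
  rw [Submodule.ker_mkQ]
  exact hext t

end LocalCohomology

section Graphs

variable {σ : Type*} {Γ : SimpleGraph σ} {s : Set σ}

lemma isIndepSet_pair {i j : σ} : Γ.IsIndepSet {i, j} ↔ ¬ Γ.Adj i j := by
  rw [SimpleGraph.IsIndepSet, Set.pairwise_pair]
  exact ⟨fun h hij => (h hij.ne).1 hij, fun h _ => ⟨h, mt SimpleGraph.Adj.symm h⟩⟩

lemma exists_isIndepSet_insert [Nonempty σ] (hs : Γ.IsIndepSet s) :
    ∃ i, Γ.IsIndepSet (insert i s) := by
  obtain rfl | ⟨i, hi⟩ := s.eq_empty_or_nonempty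
  · exact ⟨Classical.arbitrary σ, by simp⟩
  · exact ⟨i, by rwa [Set.insert_eq_of_mem hi]⟩

lemma exists_ne_isIndepSet_insert [Nontrivial σ] (hΓ : Γᶜ.Preconnected)
    (hs : Γ.IsIndepSet s) (i : σ) : ∃ j ≠ i, Γ.IsIndepSet (insert j s) := by
  by_cases hex : ∃ j ∈ s, j ≠ i
  · obtain ⟨j, hjs, hji⟩ := hex
    exact ⟨j, hji, by rwa [Set.insert_eq_of_mem hjs]⟩
  · push Not at hex
    obtain ⟨j, hij⟩ := hΓ.exists_adj_of_nontrivial i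
    exact ⟨j, hij.ne', (isIndepSet_pair.2 fun h => hij.2 h.symm).mono
      (Set.insert_subset_insert hex)⟩

lemma eq_of_isIndepSet_insert {α : Type*} (hΓ : Γᶜ.Preconnected) {f : σ → α}
    (hf : ∀ i j, Γ.IsIndepSet (insert i (insert j s)) → f i = f j) {i j : σ}
    (hi : Γ.IsIndepSet (insert i s)) (hj : Γ.IsIndepSet (insert j s)) : f i = f j := by
  obtain rfl | ⟨l, hl⟩ := s.eq_empty_or_nonempty
  · obtain ⟨w⟩ := hΓ i j
    clear hi hj
    induction w with
    | nil => rfl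
    | cons hadj _ ih =>
      exact (hf _ _ (by simpa only [insert_empty_eq] using isIndepSet_pair.2 hadj.2)).trans ih
  · have hfl (i) (hi : Γ.IsIndepSet (insert i s)) : f i = f l :=
      hf i l (by rwa [Set.insert_eq_of_mem hl])
    rw [hfl i hi, hfl j hj]

lemma exists_join_of_not_preconnected_compl (hΓ : ¬ Γᶜ.Preconnected) :
    ∃ A : Set σ, A.Nonempty ∧ Aᶜ.Nonempty ∧ ∀ a ∈ A, ∀ b ∉ A, Γ.Adj a b := by
  simp only [SimpleGraph.Preconnected, not_forall] at hΓ
  obtain ⟨u, v, huv⟩ := hΓ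
  refine ⟨{w | Γᶜ.Reachable u w}, ⟨u, .refl u⟩, ⟨v, huv⟩, fun a ha b hb => ?_⟩
  by_contra hab
  have hadj : Γᶜ.Adj a b := ⟨fun h => hb (h ▸ ha), hab⟩
  exact hb (SimpleGraph.Reachable.trans ha hadj.reachable)

lemma exists_adj_mem_iff_of_not_colorable_two (hΓ : ¬ Γ.Colorable 2) (A : Set σ) :
    ∃ x y, Γ.Adj x y ∧ (x ∈ A ↔ y ∈ A) := by
  by_contra hcut
  let c : Γ.Coloring Prop :=
    SimpleGraph.Coloring.mk (· ∈ A) fun hadj heq => hcut ⟨_, _, hadj, iff_of_eq heq⟩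
  exact hΓ (by simpa using c.colorable)

lemma nontrivial_of_not_colorable_two (hΓ : ¬ Γ.Colorable 2) : Nontrivial σ := by
  obtain ⟨x, y, hxy, -⟩ := exists_adj_mem_iff_of_not_colorable_two hΓ ∅
  exact ⟨x, y, hxy.ne⟩

end Graphs

section Exponents

variable {σ : Type*}

lemma single_add_single_le_iff {i j : σ} (hij : i ≠ j) {a : σ →₀ ℕ} :
    Finsupp.single i 1 + Finsupp.single j 1 ≤ a ↔ i ∈ a.support ∧ j ∈ a.support := by
  classical
  simp only [Finsupp.le_def, Finsupp.add_apply, Finsupp.single_apply, Finsupp.mem_support_iff]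
  grind

lemma coe_support_single_add_subset (i : σ) (s : ℕ) (a : σ →₀ ℕ) :
    ((Finsupp.single i s + a).support : Set σ) ⊆ insert i (a.support : Set σ) := by
  classical
  intro j hj
  by_contra hcon
  simp_all [Finsupp.single_apply, eq_comm]

lemma exists_coeff_eq_of_isIndepSet_insert {R : Type*} [CommSemiring R] [Finite σ]
    {Γ : SimpleGraph σ} (hΓ : Γᶜ.Preconnected) {H : σ → MvPolynomial σ R}
    (hH : ∀ (a : σ →₀ ℕ) (i j : σ), Γ.IsIndepSet (insert i (insert j (a.support : Set σ))) →
      coeff a (H i) = coeff a (H j)) :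
    ∃ G : MvPolynomial σ R, ∀ (a : σ →₀ ℕ) (i : σ), Γ.IsIndepSet (insert i (a.support : Set σ)) →
      coeff a G = coeff a (H i) := by
  classical
  have := Fintype.ofFinite σ
  have hvalue (a : σ →₀ ℕ) : ∃ c : R, ∀ i, Γ.IsIndepSet (insert i (a.support : Set σ)) →
      c = coeff a (H i) := by
    by_cases hex : ∃ i, Γ.IsIndepSet (insert i (a.support : Set σ))
    · obtain ⟨i, hi⟩ := hex
      exact ⟨coeff a (H i), fun j hj => eq_of_isIndepSet_insert hΓ (hH a) hi hj⟩
    · exact ⟨0, fun i hi => absurd ⟨i, hi⟩ hex⟩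
  choose c hc using hvalue
  refine ⟨∑ a ∈ Finset.univ.biUnion fun i => (H i).support, monomial a (c a), fun a i hi => ?_⟩
  simp only [coeff_sum, coeff_monomial, Finset.sum_ite_eq']
  split_ifs with ha
  · exact hc a i hi
  · have hai : a ∉ (H i).support := fun h => ha (Finset.mem_biUnion.2 ⟨i, Finset.mem_univ i, h⟩)
    exact (notMem_support_iff.1 hai).symm

end Exponents

section EdgeRing

variable {k : Type} [Field k] {σ : Type} {Γ : SimpleGraph σ}

lemma edgeIdeal_eq_span_monomial (k : Type) [Field k] (Γ : SimpleGraph σ) :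
    edgeIdeal k Γ = Ideal.span ((fun s => monomial s (1 : k)) ''
      {s | ∃ i j, Γ.Adj i j ∧ s = Finsupp.single i 1 + Finsupp.single j 1}) := by
  have hX (i j : σ) : (X i * X j : MvPolynomial σ k) =
      monomial (Finsupp.single i 1 + Finsupp.single j 1) 1 := by
    simp [X, monomial_mul]
  unfold edgeIdeal
  congr 1
  ext p
  simp only [hX, Set.mem_image, Set.mem_ofPred_eq]
  grind

lemma mem_edgeIdeal_iff {p : MvPolynomial σ k} :
    p ∈ edgeIdeal k Γ ↔ ∀ a : σ →₀ ℕ, Γ.IsIndepSet (a.support : Set σ) → coeff a p = 0 := by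
  rw [edgeIdeal_eq_span_monomial, mem_ideal_span_monomial_image]
  refine forall_congr' fun a => ?_
  have hdiv : (∃ s ∈ {s | ∃ i j, Γ.Adj i j ∧ s = Finsupp.single i 1 + Finsupp.single j 1}, s ≤ a)
      ↔ ¬ Γ.IsIndepSet (a.support : Set σ) := by
    simp only [SimpleGraph.IsIndepSet, Set.Pairwise, Set.mem_ofPred_eq]
    grind [single_add_single_le_iff, SimpleGraph.Adj.ne]
  rw [hdiv, mem_support_iff]
  tauto

lemma mem_edgeIdeal_of_forall_X_pow_mul_mem [Nonempty σ] {s : ℕ} {q : MvPolynomial σ k}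
    (hq : ∀ i, X i ^ s * q ∈ edgeIdeal k Γ) : q ∈ edgeIdeal k Γ := by
  refine mem_edgeIdeal_iff.2 fun a ha => ?_
  obtain ⟨i, hi⟩ := exists_isIndepSet_insert ha
  have hcoeff := mem_edgeIdeal_iff.1 (hq i) _ (hi.mono (coe_support_single_add_subset i s a))
  rwa [X_pow_eq_monomial, coeff_monomial_mul, one_mul] at hcoeff

lemma coeff_divMonomial_eq_of_X_pow_mul_sub_mem {i j : σ} {s : ℕ} {p q : MvPolynomial σ k}
    (hpq : X j ^ s * p - X i ^ s * q ∈ edgeIdeal k Γ) {a : σ →₀ ℕ}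
    (ha : Γ.IsIndepSet (insert i (insert j (a.support : Set σ)))) :
    coeff a (p.divMonomial (Finsupp.single i s)) =
      coeff a (q.divMonomial (Finsupp.single j s)) := by
  have hsupp : ((Finsupp.single i s + (Finsupp.single j s + a)).support : Set σ) ⊆
      insert i (insert j (a.support : Set σ)) :=
    (coe_support_single_add_subset _ _ _).trans
      (Set.insert_subset_insert (coe_support_single_add_subset _ _ _))
  have hcoeff := mem_edgeIdeal_iff.1 hpq _ (ha.mono hsupp)
  rw [coeff_sub, sub_eq_zero, X_pow_eq_monomial, X_pow_eq_monomial, coeff_monomial_mul,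
    add_left_comm, coeff_monomial_mul, one_mul, one_mul] at hcoeff
  rwa [coeff_divMonomial, coeff_divMonomial]

lemma coeff_eq_zero_of_X_pow_mul_sub_mem {i j : σ} (hij : i ≠ j) {s : ℕ}
    {p q : MvPolynomial σ k} (hpq : X j ^ s * p - X i ^ s * q ∈ edgeIdeal k Γ) {b : σ →₀ ℕ}
    (hb : Γ.IsIndepSet (insert j (b.support : Set σ))) (hbi : b i < s) : coeff b p = 0 := by
  have hcoeff := mem_edgeIdeal_iff.1 hpq _ (hb.mono (coe_support_single_add_subset j s b))
  have hnle : ¬ Finsupp.single i s ≤ Finsupp.single j s + b := by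
    simpa [hij] using hbi
  rwa [coeff_sub, X_pow_eq_monomial, X_pow_eq_monomial, coeff_monomial_mul, one_mul,
    coeff_monomial_mul', if_neg hnle, sub_zero] at hcoeff

lemma modMonomial_mem_edgeIdeal [Nontrivial σ] (hΓ : Γᶜ.Preconnected) {s : ℕ}
    {F : σ → MvPolynomial σ k} (hF : ∀ i j, X j ^ s * F i - X i ^ s * F j ∈ edgeIdeal k Γ)
    (i : σ) : (F i).modMonomial (Finsupp.single i s) ∈ edgeIdeal k Γ := by
  refine mem_edgeIdeal_iff.2 fun b hb => ?_
  by_cases hle : Finsupp.single i s ≤ b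
  · exact coeff_modMonomial_of_le _ hle
  · obtain ⟨j, hji, hj⟩ := exists_ne_isIndepSet_insert hΓ hb i
    rw [coeff_modMonomial_of_not_le _ hle]
    refine coeff_eq_zero_of_X_pow_mul_sub_mem hji.symm (hF i j) hj ?_
    simpa using hle

lemma exists_sub_X_pow_mul_mem_edgeIdeal [Finite σ] [Nontrivial σ] (hΓ : Γᶜ.Preconnected) {s : ℕ}
    (hs : s ≠ 0) {F : σ → MvPolynomial σ k}
    (hF : ∀ i j, X j ^ s * F i - X i ^ s * F j ∈ edgeIdeal k Γ) :
    ∃ G : MvPolynomial σ k, ∀ i, F i - X i ^ s * G ∈ edgeIdeal k Γ := by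
  obtain ⟨G, hG⟩ := exists_coeff_eq_of_isIndepSet_insert hΓ
    (H := fun i => (F i).divMonomial (Finsupp.single i s))
    fun a i j ha => coeff_divMonomial_eq_of_X_pow_mul_sub_mem (hF i j) ha
  refine ⟨G, fun i => ?_⟩
  have hquot : X i ^ s * ((F i).divMonomial (Finsupp.single i s) - G) ∈ edgeIdeal k Γ := by
    refine mem_edgeIdeal_iff.2 fun b hb => ?_
    rw [X_pow_eq_monomial, coeff_monomial_mul', one_mul]
    split_ifs with hle
    · have hib : i ∈ b.support := by
        have := Finsupp.single_le_iff.1 hle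
        exact Finsupp.mem_support_iff.2 (by omega)
      have hsupp : insert i ((b - Finsupp.single i s).support : Set σ) ⊆ b.support :=
        Set.insert_subset hib (Finset.coe_subset.2 Finsupp.support_tsub)
      rw [coeff_sub, hG _ i (hb.mono hsupp), sub_self]
    · rfl
  rw [← divMonomial_add_modMonomial (F i) (Finsupp.single i s), ← X_pow_eq_monomial]
  convert add_mem hquot (modMonomial_mem_edgeIdeal hΓ hF i) using 1
  ring

lemma exists_extension_pow_maxIdeal [Finite σ] [Nontrivial σ] (hΓ : Γᶜ.Preconnected) (t : ℕ)
    (φ : (maxIdeal k σ ^ t : Ideal (MvPolynomial σ k)) →ₗ[MvPolynomial σ k]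
      MvPolynomial σ k ⧸ edgeIdeal k Γ) :
    ∃ g : MvPolynomial σ k →ₗ[MvPolynomial σ k] MvPolynomial σ k ⧸ edgeIdeal k Γ,
      g.domRestrict (maxIdeal k σ ^ t) = φ := by
  have hX (i : σ) : (X i : MvPolynomial σ k) ^ (t + 1) ∈ maxIdeal k σ ^ t :=
    Ideal.pow_le_pow_right t.le_succ
      (Ideal.pow_mem_pow (Ideal.subset_span (Set.mem_range_self i)) _)
  have hsmul (p q : MvPolynomial σ k) : p • Ideal.Quotient.mk (edgeIdeal k Γ) q =
      Ideal.Quotient.mk (edgeIdeal k Γ) (p * q) := rfl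
  refine exists_extension_of_compatible (fun i => ⟨X i ^ (t + 1), hX i⟩) (fun z hz => ?_)
    (fun F hF => ?_) φ
  · obtain ⟨q, rfl⟩ := Ideal.Quotient.mk_surjective z
    simp only [hsmul, Ideal.Quotient.eq_zero_iff_mem] at hz ⊢
    exact mem_edgeIdeal_of_forall_X_pow_mul_mem hz
  · choose f hf using fun i => Ideal.Quotient.mk_surjective (F i)
    obtain rfl : (fun i => Ideal.Quotient.mk (edgeIdeal k Γ) (f i)) = F := funext hf
    simp only [hsmul, Ideal.Quotient.eq] at hF
    obtain ⟨G, hG⟩ := exists_sub_X_pow_mul_mem_edgeIdeal hΓ t.succ_ne_zero hF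
    exact ⟨Ideal.Quotient.mk _ G, fun i => Ideal.Quotient.eq.2 (hG i)⟩

lemma subsingleton_locCoh_one_of_preconnected_compl [Finite σ] [Nontrivial σ]
    (hΓ : Γᶜ.Preconnected) : Subsingleton (locCoh k (edgeIdeal k Γ) 1) :=
  ModuleCat.subsingleton_of_isZero
    (isZero_localCohomology_one_of_exists_extension (exists_extension_pow_maxIdeal hΓ))

end EdgeRing

section DepthZero

variable {k : Type} [Field k] {σ : Type} {Γ : SimpleGraph σ}

lemma mem_associatedPrimes_quotient_of_isMaximal {R : Type*} [CommRing R] {m J : Ideal R}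
    (hm : m.IsMaximal) {f : R} (hf : f ∉ J) (hmf : ∀ r ∈ m, r * f ∈ J) :
    m ∈ associatedPrimes R (R ⧸ J) := by
  have hcolon : m = (⊥ : Submodule R (R ⧸ J)).colon {Ideal.Quotient.mk J f} := by
    refine hm.eq_of_le (fun htop => hf ?_) fun r hr => ?_
    · have hone := (Ideal.eq_top_iff_one _).1 htop
      rwa [Submodule.mem_colon_singleton, one_smul, Submodule.mem_bot,
        Ideal.Quotient.eq_zero_iff_mem] at hone
    · rw [Submodule.mem_colon_singleton, Submodule.mem_bot]
      exact Ideal.Quotient.eq_zero_iff_mem.2 (hmf r hr)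
  exact ⟨hm.isPrime, _, by rw [← hcolon, hm.isPrime.radical]⟩

lemma maxIdeal_isMaximal (k : Type) [Field k] (σ : Type) : (maxIdeal k σ).IsMaximal := by
  have hker : maxIdeal k σ = RingHom.ker (constantCoeff : MvPolynomial σ k →+* k) := by
    ext p
    have hmem := mem_pow_idealOfVars_iff' 1 p
    simp only [pow_one, Nat.lt_one_iff, Finsupp.degree_eq_zero_iff, forall_eq] at hmem
    rw [RingHom.mem_ker, constantCoeff_eq, ← hmem]
    rfl
  rw [hker]
  exact RingHom.ker_isMaximal_of_surjective _ fun c => ⟨C c, constantCoeff_C σ c⟩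

lemma edgeIdeal_le_maxIdeal_sq : edgeIdeal k Γ ≤ maxIdeal k σ ^ 2 := by
  rw [edgeIdeal, Ideal.span_le]
  rintro _ ⟨i, j, -, rfl⟩
  rw [pow_two]
  exact Ideal.mul_mem_mul (Ideal.subset_span ⟨i, rfl⟩) (Ideal.subset_span ⟨j, rfl⟩)

lemma X_mul_X_mul_X_notMem_edgeIdeal_sq (x y w : σ) :
    (X x * X y * X w : MvPolynomial σ k) ∉ edgeIdeal k Γ ^ 2 := by
  intro hmem
  have hdeg : (X x * X y * X w : MvPolynomial σ k) ∈ idealOfVars σ k ^ 4 := by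
    have := Ideal.pow_right_mono (edgeIdeal_le_maxIdeal_sq (k := k) (Γ := Γ)) 2 hmem
    rwa [← pow_mul] at this
  rw [X, X, X, monomial_mul, monomial_mul,
    monomial_mem_pow_idealOfVars_iff _ _ (by simp)] at hdeg
  simp at hdeg

lemma depthZero_edgeIdeal_sq_of_join {A : Set σ} (hA : ∀ a ∈ A, ∀ b ∉ A, Γ.Adj a b)
    {x y w : σ} (hx : x ∈ A) (hy : y ∈ A) (hw : w ∉ A) (hxy : Γ.Adj x y) :
    DepthZero k (edgeIdeal k Γ ^ 2) := by
  have hedge {u v : σ} (huv : Γ.Adj u v) : (X u * X v : MvPolynomial σ k) ∈ edgeIdeal k Γ :=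
    Ideal.subset_span ⟨u, v, huv, rfl⟩
  have hX (i : σ) : X i * (X x * X y * X w) ∈ edgeIdeal k Γ ^ 2 := by
    rw [pow_two]
    by_cases hi : i ∈ A
    · rw [show (X i * (X x * X y * X w) : MvPolynomial σ k) = X i * X w * (X x * X y) by ring]
      exact Ideal.mul_mem_mul (hedge (hA i hi w hw)) (hedge hxy)
    · rw [show (X i * (X x * X y * X w) : MvPolynomial σ k) = X x * X i * (X y * X w) by ring]
      exact Ideal.mul_mem_mul (hedge (hA x hx i hi)) (hedge (hA y hy w hw))
  have hle : maxIdeal k σ ≤ (edgeIdeal k Γ ^ 2).colon {X x * X y * X w} :=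
    Ideal.span_le.2 (Set.range_subset_iff.2 fun i => Submodule.mem_colon_singleton.2 (hX i))
  exact mem_associatedPrimes_quotient_of_isMaximal (maxIdeal_isMaximal k σ)
    (X_mul_X_mul_X_notMem_edgeIdeal_sq x y w) fun r hr => Submodule.mem_colon_singleton.1 (hle hr)

lemma depthZero_edgeIdeal_sq_of_not_preconnected_compl (hΓ : ¬ Γᶜ.Preconnected)
    (hnb : ¬ Γ.Colorable 2) : DepthZero k (edgeIdeal k Γ ^ 2) := by
  obtain ⟨A, ⟨u, hu⟩, ⟨v, hv⟩, hA⟩ := exists_join_of_not_preconnected_compl hΓ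
  obtain ⟨x, y, hxy, hiff⟩ := exists_adj_mem_iff_of_not_colorable_two hnb A
  by_cases hx : x ∈ A
  · exact depthZero_edgeIdeal_sq_of_join hA hx (hiff.1 hx) hv hxy
  · exact depthZero_edgeIdeal_sq_of_join (A := Aᶜ)
      (fun a ha b hb => (hA b (not_not.1 hb) a ha).symm) hx (mt hiff.2 hx) (not_not.2 hu) hxy

lemma nontrivial_locCoh_of_rDepth_eq {J : Ideal (MvPolynomial σ k)} {i : ℕ} (hi : i ≠ 0)
    (hJ : rDepth k J = i) : Nontrivial (locCoh k J i) := by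
  subst hJ
  exact Nat.sInf_mem (Nat.nonempty_of_pos_sInf (Nat.pos_of_ne_zero hi))

end DepthZero

theorem stmt15_general (k : Type) [Field k] {σ : Type} [Finite σ] (Γ : SimpleGraph σ)
    (hnb : ¬ Γ.Colorable 2) (h : Nontrivial (locCoh k (edgeIdeal k Γ) 1)) :
    DepthZero k ((edgeIdeal k Γ) ^ 2) := by
  have := nontrivial_of_not_colorable_two hnb
  refine depthZero_edgeIdeal_sq_of_not_preconnected_compl (fun hconn => ?_) hnb
  exact not_subsingleton_iff_nontrivial.2 h (subsingleton_locCoh_one_of_preconnected_compl hconn)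

/-- Let `Γ` be a non-bipartite graph. If `depth R/I = 1`, then
`depth R/I^2 = 0`, i.e. the maximal graded ideal is an associated prime of `R/I^2`. -/
theorem stmt15 (k : Type) [Field k] (n : ℕ) (Γ : SimpleGraph (Fin n))
    (hiso : NoIsolated Γ) (hnb : ¬ Γ.Colorable 2)
    (h : rDepth k (edgeIdeal k Γ) = 1) :
    DepthZero k ((edgeIdeal k Γ) ^ 2) :=
  stmt15_general k Γ hnb (nontrivial_locCoh_of_rDepth_eq one_ne_zero h)

end
end

section
/- Let Γ be a connected non-bipartite graph. If depth R/I^2 = 1, then depth R/I^5 = 0, i.e., the maximal graded ideal m is an associated prime of R/I^5. -/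
open MvPolynomial

noncomputable section

/-!
If `H¹_m(R/I²) ≠ 0`, then `R/I²` has a nonzero socle or some linear map `m → R/I²` is not
multiplication by an element of `R/I²`: otherwise every linear map `m^t → R/I²` would be such a
multiplication, and `Ext¹(R/m^t, R/I²)` would vanish for all `t`. Comparing coefficients, this
produces either a monomial outside `I²` that is multiplied into `I²` by all variables, with at most
one exception, or a monomial `x^d` for which the graph on the variables `x_u` with `x_u x^d ∉ I²`,
whose edges are the pairs with `x_u x_v x^d ∉ I²`, is disconnected. In both cases `Γ` has a triangle
`x y z` and a walk `x w i j` such that every vertex has a neighbour among these six. For `t ≥ 5` the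
monomial `x²yzw²i²j · (xy)^(t-5)` has degree `2t - 1`, so it is not in `I^t`, but every variable
multiplies it into `I^t`.
-/

section BaerAt

variable {R M : Type*} [CommRing R] [AddCommGroup M] [Module R M] {I J : Ideal R}

/-- Baer's extension condition at the single ideal `J`: every linear map `J → M` is multiplication
by an element of `M`, that is, it extends to `R`. This encodes the vanishing of `Ext¹(R ⧸ J, M)`. -/
def BaerAt (J : Ideal R) (M : Type*) [AddCommGroup M] [Module R M] : Prop :=
  ∀ φ : J →ₗ[R] M, ∃ g : M, ∀ j : J, φ j = (j : R) • g

lemma baerAt_top : BaerAt (⊤ : Ideal R) M := by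
  refine fun φ => ⟨φ ⟨1, Submodule.mem_top⟩, fun j => ?_⟩
  rw [← map_smul]
  exact congrArg φ (Subtype.ext (mul_one (j : R)).symm)

lemma BaerAt.exists_forall_map_mul_eq_smul (hI : BaerAt I M) (φ : (I * J : Ideal R) →ₗ[R] M)
    (u : J) : ∃ g : M, ∀ i : I, φ ⟨i * u, Ideal.mul_mem_mul i.2 u.2⟩ = (i : R) • g := by
  let mulRight : I →ₗ[R] (I * J : Ideal R) :=
    (LinearMap.mulRight R (u : R) ∘ₗ I.subtype).codRestrict (I * J)
      fun i => Ideal.mul_mem_mul i.2 u.2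
  exact hI (φ ∘ₗ mulRight)

lemma BaerAt.mul (hI : BaerAt I M) (hJ : BaerAt J M)
    (hsocle : ∀ g : M, (∀ x ∈ I, x • g = 0) → g = 0) : BaerAt (I * J) M := by
  intro φ
  choose ψ hψ using hI.exists_forall_map_mul_eq_smul φ
  have eq_of_smul_eq {a b : M} (hab : ∀ i : I, (i : R) • a = (i : R) • b) : a = b :=
    sub_eq_zero.1 <| hsocle _ fun x hx => by rw [smul_sub, hab ⟨x, hx⟩, sub_self]
  let ψLinear : J →ₗ[R] M :=
    { toFun := ψ
      map_add' u v := eq_of_smul_eq fun i => by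
        rw [smul_add, ← hψ, ← hψ, ← hψ, ← map_add]
        exact congrArg φ (Subtype.ext (mul_add (i : R) u v))
      map_smul' r u := eq_of_smul_eq fun i => by
        rw [RingHom.id_apply, smul_comm, ← hψ, ← hψ, ← map_smul]
        exact congrArg φ (Subtype.ext (mul_left_comm (i : R) r u)) }
  obtain ⟨g, hg⟩ := hJ ψLinear
  refine ⟨g, fun ⟨x, hx⟩ => ?_⟩
  induction hx using Submodule.mul_induction_on' with
  | mem_mul_mem i hi u hu =>
    calc φ ⟨i * u, Ideal.mul_mem_mul hi hu⟩ = i • ψ ⟨u, hu⟩ := hψ ⟨u, hu⟩ ⟨i, hi⟩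
      _ = i • u • g := congrArg (i • ·) (hg ⟨u, hu⟩)
      _ = (i * u) • g := smul_smul i u g
  | add x hx y hy ihx ihy =>
    calc φ ⟨x + y, add_mem hx hy⟩ = φ ⟨x, hx⟩ + φ ⟨y, hy⟩ := map_add φ ⟨x, hx⟩ ⟨y, hy⟩
      _ = (x + y) • g := by rw [ihx, ihy, add_smul]

lemma BaerAt.pow (hI : BaerAt I M) (hsocle : ∀ g : M, (∀ x ∈ I, x • g = 0) → g = 0) (t : ℕ) :
    BaerAt (I ^ t) M := by
  induction t with
  | zero => simpa only [pow_zero, Ideal.one_eq_top] using baerAt_top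
  | succ t ih => simpa only [pow_succ'] using hI.mul ih hsocle

/- With `α` lifting `p` to `R` and `p e = 1`, the element `x - α x • e` lies in `ker p`; the
correction `α x • g` repairs the extension `x ↦ f (x - α x • e)` on `ker p`. -/
lemma BaerAt.exists_extend_ker {P : Type*} [AddCommGroup P] [Module R P] [Module.Projective R P]
    (hJ : BaerAt J M) (p : P →ₗ[R] R ⧸ J) (hp : Function.Surjective p)
    (f : LinearMap.ker p →ₗ[R] M) : ∃ h : P →ₗ[R] M, ∀ x : LinearMap.ker p, h x = f x := by
  obtain ⟨α, hα⟩ := Module.projective_lifting_property (Submodule.mkQ J) p J.mkQ_surjective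
  have mkQ_lift (x : P) : J.mkQ (α x) = p x := LinearMap.congr_fun hα x
  obtain ⟨e, he⟩ := hp (J.mkQ 1)
  have map_smul_e (r : R) : p (r • e) = J.mkQ r := by
    rw [map_smul, he, ← map_smul, smul_eq_mul, mul_one]
  let smulE : J →ₗ[R] LinearMap.ker p :=
    (LinearMap.toSpanSingleton R P e ∘ₗ J.subtype).codRestrict _ fun j =>
      (map_smul_e j).trans ((Submodule.Quotient.mk_eq_zero J).2 j.2)
  let proj : P →ₗ[R] LinearMap.ker p :=
    (LinearMap.id - LinearMap.toSpanSingleton R P e ∘ₗ α).codRestrict _ fun x => by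
      simp only [LinearMap.mem_ker, LinearMap.sub_apply, LinearMap.id_apply, LinearMap.comp_apply,
        LinearMap.toSpanSingleton_apply, map_sub, map_smul_e, mkQ_lift, sub_self]
  obtain ⟨g, hg⟩ := hJ (f ∘ₗ smulE)
  refine ⟨f ∘ₗ proj + LinearMap.toSpanSingleton R M g ∘ₗ α, fun x => ?_⟩
  have lift_mem : α x ∈ J := by
    rw [← Submodule.Quotient.mk_eq_zero, ← Submodule.mkQ_apply, mkQ_lift, LinearMap.mem_ker.1 x.2]
  calc f (proj x) + α x • g = f (proj x) + f (smulE ⟨α x, lift_mem⟩) :=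
        congrArg (f (proj x) + ·) (hg ⟨α x, lift_mem⟩).symm
    _ = f (proj x + smulE ⟨α x, lift_mem⟩) := (map_add f _ _).symm
    _ = f x := congrArg f (Subtype.ext (sub_add_cancel (x : P) _))

lemma BaerAt.exists_comp_eq {P₀ P₁ : Type*} [AddCommGroup P₀] [Module R P₀]
    [Module.Projective R P₀] [AddCommGroup P₁] [Module R P₁] (hJ : BaerAt J M)
    (p : P₀ →ₗ[R] R ⧸ J) (hp : Function.Surjective p) (d : P₁ →ₗ[R] P₀)
    (exact_d : LinearMap.range d = LinearMap.ker p) (f : P₁ →ₗ[R] M)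
    (hf : LinearMap.ker d ≤ LinearMap.ker f) : ∃ h : P₀ →ₗ[R] M, h ∘ₗ d = f := by
  let dRange : P₁ →ₗ[R] LinearMap.ker p :=
    d.codRestrict _ fun x => exact_d ▸ LinearMap.mem_range_self d x
  have dRange_surjective : Function.Surjective dRange := fun ⟨y, hy⟩ => by
    obtain ⟨x, rfl⟩ := exact_d.symm ▸ hy
    exact ⟨x, rfl⟩
  have ker_dRange : LinearMap.ker dRange ≤ LinearMap.ker f := by
    rwa [LinearMap.ker_codRestrict]
  let fKer : LinearMap.ker p →ₗ[R] M := (LinearMap.ker dRange).liftQ f ker_dRange ∘ₗ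
    (dRange.quotKerEquivOfSurjective dRange_surjective).symm
  obtain ⟨h, hh⟩ := hJ.exists_extend_ker p hp fKer
  refine ⟨h, LinearMap.ext fun x => (hh (dRange x)).trans ?_⟩
  have symm_dRange : (dRange.quotKerEquivOfSurjective dRange_surjective).symm (dRange x) =
      Submodule.Quotient.mk x := (LinearEquiv.symm_apply_eq _).2 rfl
  exact congrArg ((LinearMap.ker dRange).liftQ f ker_dRange) symm_dRange

end BaerAt

section LocalCohomology

open CategoryTheory Limits

universe u

variable {R : Type u} [CommRing R] {J : Ideal R} {M : ModuleCat.{u} R}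

lemma BaerAt.isZero_ext_one (hJ : BaerAt J M) :
    IsZero (((Ext R (ModuleCat.{u} R) 1).obj (Opposite.op (ModuleCat.of R (R ⧸ J)))).obj M) := by
  let P := ProjectiveResolution.of (ModuleCat.of R (R ⧸ J))
  have : Module.Projective R (P.complex.X 0) :=
    (IsProjective.iff_projective _).2 (P.projective 0)
  have exact_one := P.complex_exactAt_succ 0
  rw [HomologicalComplex.exactAt_iff' _ 2 1 0 (by simp) (by simp),
    ShortComplex.moduleCat_exact_iff] at exact_one
  have exact_zero : LinearMap.range (P.complex.d 1 0).hom = LinearMap.ker (P.π.f 0).hom :=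
    (ShortComplex.moduleCat_exact_iff_range_eq_ker _).1 P.exact₀
  have π_surjective : Function.Surjective (P.π.f 0).hom :=
    (ModuleCat.epi_iff_surjective _).1 inferInstance
  refine IsZero.of_iso ?_ (P.isoExt 1 M)
  rw [← HomologicalComplex.exactAt_iff_isZero_homology,
    HomologicalComplex.exactAt_iff' _ 0 1 2 (by simp) (by simp), ShortComplex.moduleCat_exact_iff]
  intro (f : P.complex.X 1 ⟶ M) (hf : P.complex.d 2 1 ≫ f = 0)
  have ker_le : LinearMap.ker (P.complex.d 1 0).hom ≤ LinearMap.ker f.hom := fun x hx => by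
    obtain ⟨y, rfl⟩ := exact_one x hx
    exact ConcreteCategory.congr_hom hf y
  obtain ⟨h, hh⟩ := hJ.exists_comp_eq (P.π.f 0).hom π_surjective (P.complex.d 1 0).hom exact_zero
    f.hom ker_le
  exact ⟨ModuleCat.ofHom h, ModuleCat.hom_ext hh⟩

lemma subsingleton_localCohomology_one (hJ : ∀ t, BaerAt (J ^ t) M) :
    Subsingleton ((localCohomology J 1).obj M) := by
  have := localCohomology.hasColimitDiagram.{u, 0} (localCohomology.idealPowersDiagram J) 1
  let F := localCohomology.diagram (localCohomology.idealPowersDiagram J) 1 ⋙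
    (evaluation _ _).obj M
  have isZero_F : IsZero F := Functor.isZero F fun t => (hJ _).isZero_ext_one
  have isZero_obj : IsZero ((localCohomology J 1).obj M) :=
    ((colimit.isColimit F).isZero_pt isZero_F).of_iso (colimitObjIsoColimitCompEvaluation
      (localCohomology.diagram (localCohomology.idealPowersDiagram J) 1) M)
  exact ModuleCat.subsingleton_of_isZero isZero_obj

end LocalCohomology

section MonomialIdeal

open Finsupp (single)

variable {σ A : Type*} [CommRing A] {S : Set (σ →₀ ℕ)} {hS : IsUpperSet S}

lemma mem_restrictSupportIdeal_iff {p : MvPolynomial σ A} :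
    p ∈ restrictSupportIdeal A S hS ↔ ∀ b ∈ p.support, b ∈ S :=
  Iff.rfl

lemma sub_mem_restrictSupportIdeal_iff {p q : MvPolynomial σ A} :
    p - q ∈ restrictSupportIdeal A S hS ↔ ∀ b ∉ S, coeff b p = coeff b q := by
  simp only [mem_restrictSupportIdeal_iff, mem_support_iff, coeff_sub, sub_ne_zero]
  exact forall_congr' fun b => not_imp_comm

lemma eq_zero_of_idealOfVars_smul_eq_zero
    (hsocle : ∀ d, (∀ j, d + single j 1 ∈ S) → d ∈ S)
    (g : MvPolynomial σ A ⧸ restrictSupportIdeal A S hS)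
    (hg : ∀ x ∈ idealOfVars σ A, x • g = 0) : g = 0 := by
  obtain ⟨p, rfl⟩ := Ideal.Quotient.mk_surjective g
  rw [Ideal.Quotient.eq_zero_iff_mem, mem_restrictSupportIdeal_iff]
  refine fun b hb => hsocle b fun j => ?_
  have X_mul_mem : X j * p ∈ restrictSupportIdeal A S hS :=
    Ideal.Quotient.eq_zero_iff_mem.1 (hg (X j) (Ideal.subset_span ⟨j, rfl⟩))
  refine mem_restrictSupportIdeal_iff.1 X_mul_mem _ ?_
  rwa [mem_support_iff, add_comm, coeff_X_mul, ← mem_support_iff]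

/-- The polynomials `F i` satisfy the relations `X j * F i = X i * F j` modulo the monomial ideal
with exponent set `S`, so that `X i ↦ F i` defines a linear map from the ideal of the variables to
the quotient by that monomial ideal. -/
def IsCocycleModulo (S : Set (σ →₀ ℕ)) (F : σ → MvPolynomial σ A) : Prop :=
  ∀ i j, ∀ d ∉ S, coeff d (X j * F i) = coeff d (X i * F j)

/-- For the monomial ideal `J` with exponent set `S`, the graph on the variables `x_i` with
`x^b x_i ∉ J` that joins `x_p` and `x_q` when `x^b x_p x_q ∉ J` is connected. Connectedness is
expressed through cuts: every cut of the vertex set is crossed by an edge. -/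
def IsShiftConnected (S : Set (σ →₀ ℕ)) (b : σ →₀ ℕ) : Prop :=
  ∀ U : Set σ, ∀ i ∈ U, ∀ j ∉ U, b + single i 1 ∉ S → b + single j 1 ∉ S →
    ∃ p ∈ U, ∃ q ∉ U, b + single p 1 + single q 1 ∉ S

variable {F : σ → MvPolynomial σ A}

lemma IsCocycleModulo.coeff_add_single_eq (hF : IsCocycleModulo S F) {b : σ →₀ ℕ}
    (hb : IsShiftConnected S b) {i j : σ} (hi : b + single i 1 ∉ S) (hj : b + single j 1 ∉ S) :
    coeff (b + single i 1) (F i) = coeff (b + single j 1) (F j) := by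
  by_contra hne
  obtain ⟨p, hp, q, hq, hpq⟩ :=
    hb {l | coeff (b + single i 1) (F i) = coeff (b + single l 1) (F l)} i rfl j hne hi hj
  have hcoeff : coeff (b + single p 1) (F p) = coeff (b + single q 1) (F q) := by
    have h := hF p q _ hpq
    rwa [add_comm, coeff_X_mul, ← add_assoc, add_comm (single q 1 + b), coeff_X_mul,
      add_comm (single q 1)] at h
  exact hq (hp.trans hcoeff)

lemma IsCocycleModulo.exists_forall_coeff_eq [Finite σ] (hF : IsCocycleModulo S F)
    (hconn : ∀ b, IsShiftConnected S b) :
    ∃ G : MvPolynomial σ A, ∀ b i, b + single i 1 ∉ S →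
      coeff b G = coeff (b + single i 1) (F i) := by
  classical
  have := Fintype.ofFinite σ
  have exists_coeff (b : σ →₀ ℕ) :
      ∃ c, ∀ i, b + single i 1 ∉ S → c = coeff (b + single i 1) (F i) := by
    by_cases h : ∃ i, b + single i 1 ∉ S
    · exact ⟨_, fun i hi => hF.coeff_add_single_eq (hconn b) h.choose_spec hi⟩
    · exact ⟨0, fun i hi => absurd ⟨i, hi⟩ h⟩
  choose c hc using exists_coeff
  let T : Finset (σ →₀ ℕ) :=
    Finset.univ.biUnion fun i => (F i).support.image fun d => d - single i 1
  refine ⟨∑ b ∈ T, monomial b (c b), fun b i hi => ?_⟩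
  rw [coeff_sum, ← hc b i hi]
  simp only [coeff_monomial, Finset.sum_ite_eq', ite_eq_left_iff]
  intro hbT
  by_contra hne
  refine hbT (Finset.mem_biUnion.2 ⟨i, Finset.mem_univ i, Finset.mem_image.2
    ⟨b + single i 1, ?_, add_tsub_cancel_right b _⟩⟩)
  rw [mem_support_iff, ← hc b i hi]
  exact Ne.symm hne

lemma IsCocycleModulo.exists_forall_sub_mem [Finite σ] (hF : IsCocycleModulo S F)
    (hconn : ∀ b, IsShiftConnected S b)
    (hlink : ∀ v d, d v = 0 → (∀ j, j ≠ v → d + single j 1 ∈ S) → d ∈ S) :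
    ∃ G : MvPolynomial σ A, ∀ i, F i - X i * G ∈ restrictSupportIdeal A S hS := by
  classical
  obtain ⟨G, hG⟩ := hF.exists_forall_coeff_eq hconn
  refine ⟨G, fun i => sub_mem_restrictSupportIdeal_iff.2 fun d hd => ?_⟩
  by_cases hdi : d i = 0
  · obtain ⟨j, hji, hdj⟩ : ∃ j ≠ i, d + single j 1 ∉ S := by
      by_contra! h
      exact hd (hlink i d hdi h)
    have hcoeff := hF i j _ hdj
    rw [add_comm, coeff_X_mul, coeff_X_mul', if_neg (by simp [hdi, hji])] at hcoeff
    rw [hcoeff, coeff_X_mul', if_neg (by simpa using hdi)]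
  · obtain ⟨b, rfl⟩ : ∃ b, d = b + single i 1 :=
      ⟨d - single i 1, (tsub_add_cancel_of_le
        (Finsupp.single_le_iff.2 (Nat.one_le_iff_ne_zero.2 hdi))).symm⟩
    rw [← hG b i hd, add_comm, coeff_X_mul]

lemma baerAt_idealOfVars [Finite σ] (hconn : ∀ b, IsShiftConnected S b)
    (hlink : ∀ v d, d v = 0 → (∀ j, j ≠ v → d + single j 1 ∈ S) → d ∈ S) :
    BaerAt (idealOfVars σ A) (MvPolynomial σ A ⧸ restrictSupportIdeal A S hS) := by
  intro φ
  let x (i : σ) : idealOfVars σ A := ⟨X i, Ideal.subset_span ⟨i, rfl⟩⟩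
  choose F hF using fun i => Ideal.Quotient.mk_surjective (φ (x i))
  have cocycle : IsCocycleModulo S F := fun i j => by
    refine sub_mem_restrictSupportIdeal_iff (hS := hS).1 (Ideal.Quotient.eq.1 ?_)
    calc Ideal.Quotient.mk (restrictSupportIdeal A S hS) (X j * F i)
        = (X j : MvPolynomial σ A) • φ (x i) := by rw [← hF]; rfl
      _ = (X i : MvPolynomial σ A) • φ (x j) := by
        rw [← map_smul, ← map_smul]
        exact congrArg φ (Subtype.ext (mul_comm (X j) (X i)))
      _ = Ideal.Quotient.mk (restrictSupportIdeal A S hS) (X i * F j) := by rw [← hF]; rfl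
  obtain ⟨G, hG⟩ := cocycle.exists_forall_sub_mem (hS := hS) hconn hlink
  refine ⟨Ideal.Quotient.mk _ G, fun ⟨y, hy⟩ => ?_⟩
  induction hy using Submodule.span_induction with
  | mem y h =>
    obtain ⟨i, rfl⟩ := h
    exact (hF i).symm.trans (Ideal.Quotient.eq.2 (hG i))
  | zero => rw [zero_smul]; exact map_zero φ
  | add y z hy hz ihy ihz => rw [add_smul, ← ihy, ← ihz, ← map_add]; rfl
  | smul a y hy ih => rw [smul_assoc, ← ih, ← map_smul]; rfl

end MonomialIdeal

section EdgePacking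

variable {V : Type*} {Γ : SimpleGraph V} {d d' : Multiset V} {t : ℕ}

/-- The multiset `d` of vertices contains `t` edges of `Γ`, counted with multiplicity: the
combinatorial form of `x^d ∈ I^t` for the edge ideal `I`. -/
def HasEdgePacking (Γ : SimpleGraph V) : ℕ → Multiset V → Prop
  | 0, _ => True
  | t + 1, d => ∃ a b d', Γ.Adj a b ∧ d = a ::ₘ b ::ₘ d' ∧ HasEdgePacking Γ t d'

namespace HasEdgePacking

lemma cons_cons {a b : V} (hab : Γ.Adj a b) (hd : HasEdgePacking Γ t d) :
    HasEdgePacking Γ (t + 1) (a ::ₘ b ::ₘ d) :=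
  ⟨a, b, d, hab, rfl, hd⟩

lemma mono (hd : HasEdgePacking Γ t d) (hle : d ≤ d') : HasEdgePacking Γ t d' := by
  obtain ⟨e, rfl⟩ := Multiset.le_iff_exists_add.1 hle
  clear hle
  induction t generalizing d with
  | zero => trivial
  | succ t ih =>
    obtain ⟨a, b, d, hab, rfl, hd⟩ := hd
    simpa only [Multiset.cons_add] using cons_cons hab (ih hd)

lemma two_mul_le_card (hd : HasEdgePacking Γ t d) : 2 * t ≤ d.card := by
  induction t generalizing d with
  | zero => exact Nat.zero_le _
  | succ t ih =>
    obtain ⟨a, b, d, -, rfl, hd⟩ := hd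
    have := ih hd
    rw [Multiset.card_cons, Multiset.card_cons]
    lia

lemma add {s : ℕ} (hd : HasEdgePacking Γ t d) (hd' : HasEdgePacking Γ s d') :
    HasEdgePacking Γ (t + s) (d + d') := by
  induction t generalizing d with
  | zero => simpa only [zero_add] using hd'.mono (Multiset.le_add_left d' d)
  | succ t ih =>
    obtain ⟨a, b, d, hab, rfl, hd⟩ := hd
    simpa only [Nat.add_right_comm, Multiset.cons_add] using cons_cons hab (ih hd)

lemma nsmul_pair {a b : V} (hab : Γ.Adj a b) (n : ℕ) : HasEdgePacking Γ n (n • {a, b}) := by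
  induction n with
  | zero => trivial
  | succ n ih =>
    rw [succ_nsmul', Multiset.insert_eq_cons, Multiset.cons_add, Multiset.singleton_add]
    exact cons_cons hab ih

lemma cons (hd : HasEdgePacking Γ t d) (p : V) : HasEdgePacking Γ t (p ::ₘ d) :=
  hd.mono (Multiset.le_cons_self d p)

lemma of_two_edges {a b c e : V} (hab : Γ.Adj a b) (hce : Γ.Adj c e)
    (h : d = a ::ₘ b ::ₘ c ::ₘ e ::ₘ d') : HasEdgePacking Γ 2 d :=
  h ▸ cons_cons hab (cons_cons hce trivial)

lemma of_disjoint_edges {a b c e : V} (hab : Γ.Adj a b) (hce : Γ.Adj c e) (ha : a ∈ d) (hb : b ∈ d)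
    (hc : c ∈ d) (he : e ∈ d) (hac : a ≠ c) (hae : a ≠ e) (hbc : b ≠ c) (hbe : b ≠ e) :
    HasEdgePacking Γ 2 d := by
  have hle : a ::ₘ b ::ₘ c ::ₘ e ::ₘ 0 ≤ d := by
    rw [Multiset.le_iff_subset (by simp [hab.ne, hce.ne, *])]
    simp [Multiset.subset_iff, *]
  exact mono (cons_cons hab (cons_cons hce trivial)) hle

end HasEdgePacking

lemma eq_or_eq_or_exists_of_cons_eq_cons_cons {p a b : V} (h : p ::ₘ d = a ::ₘ b ::ₘ d') :
    p = a ∧ d = b ::ₘ d' ∨ p = b ∧ d = a ::ₘ d' ∨ ∃ c, d' = p ::ₘ c ∧ d = a ::ₘ b ::ₘ c := by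
  obtain h | ⟨-, c, rfl, hc⟩ := Multiset.cons_eq_cons.1 h
  · exact .inl h
  obtain ⟨rfl, rfl⟩ | ⟨-, c', rfl, rfl⟩ := Multiset.cons_eq_cons.1 hc
  · exact .inr (.inl ⟨rfl, rfl⟩)
  · exact .inr (.inr ⟨c', rfl, rfl⟩)

lemma hasEdgePacking_succ_cons {p : V} : HasEdgePacking Γ (t + 1) (p ::ₘ d) ↔
    HasEdgePacking Γ (t + 1) d ∨ ∃ r d', Γ.Adj p r ∧ d = r ::ₘ d' ∧ HasEdgePacking Γ t d' := by
  refine ⟨fun h => ?_, ?_⟩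
  · induction t generalizing d with
    | zero =>
      obtain ⟨a, b, d', hab, h, -⟩ := h
      obtain ⟨rfl, rfl⟩ | ⟨rfl, rfl⟩ | ⟨c, -, rfl⟩ := eq_or_eq_or_exists_of_cons_eq_cons_cons h
      · exact .inr ⟨b, d', hab, rfl, trivial⟩
      · exact .inr ⟨a, d', hab.symm, rfl, trivial⟩
      · exact .inl (.cons_cons hab trivial)
    | succ t ih =>
      obtain ⟨a, b, d', hab, h, hd'⟩ := h
      obtain ⟨rfl, rfl⟩ | ⟨rfl, rfl⟩ | ⟨c, rfl, rfl⟩ := eq_or_eq_or_exists_of_cons_eq_cons_cons h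
      · exact .inr ⟨b, d', hab, rfl, hd'⟩
      · exact .inr ⟨a, d', hab.symm, rfl, hd'⟩
      obtain hc | ⟨r, e, hpr, rfl, he⟩ := ih hd'
      · exact .inl (.cons_cons hab hc)
      · refine .inr ⟨r, a ::ₘ b ::ₘ e, hpr, ?_, .cons_cons hab he⟩
        rw [Multiset.cons_swap b r, Multiset.cons_swap a r]
  · rintro (hd | ⟨r, d', hpr, rfl, hd'⟩)
    · exact hd.cons p
    · exact .cons_cons hpr hd'

lemma hasEdgePacking_one_cons {p : V} : HasEdgePacking Γ 1 (p ::ₘ d) ↔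
    HasEdgePacking Γ 1 d ∨ ∃ r d', Γ.Adj p r ∧ d = r ::ₘ d' := by
  rw [hasEdgePacking_succ_cons]
  simp only [HasEdgePacking, and_true]

lemma hasEdgePacking_one_pair {a b : V} : HasEdgePacking Γ 1 {a, b} ↔ Γ.Adj a b := by
  refine ⟨fun h => ?_, fun h => .cons_cons h trivial⟩
  obtain h | ⟨r, d', har, h⟩ := hasEdgePacking_one_cons.1 h
  · exact absurd h.two_mul_le_card (by simp)
  · rwa [(Multiset.singleton_eq_cons_iff _ |>.1 h).1]

lemma hasEdgePacking_two_quadruple {a b c e : V} : HasEdgePacking Γ 2 (a ::ₘ b ::ₘ {c, e}) ↔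
    Γ.Adj a b ∧ Γ.Adj c e ∨ Γ.Adj a c ∧ Γ.Adj b e ∨ Γ.Adj a e ∧ Γ.Adj b c := by
  have eq_cons_c : b ::ₘ {c, e} = c ::ₘ {b, e} := Multiset.cons_swap b c {e}
  have eq_cons_e : b ::ₘ {c, e} = e ::ₘ {b, c} := by
    rw [Multiset.pair_comm c e]
    exact Multiset.cons_swap b e {c}
  rw [hasEdgePacking_succ_cons]
  constructor
  · rintro (h | ⟨r, d', har, h, hd'⟩)
    · exact absurd h.two_mul_le_card (by simp)
    have hr : r = b ∨ r = c ∨ r = e := by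
      simpa using (h ▸ Multiset.mem_cons_self r d' : r ∈ b ::ₘ {c, e})
    rcases hr with rfl | rfl | rfl
    · rw [← (Multiset.cons_inj_right r).1 h, hasEdgePacking_one_pair] at hd'
      exact .inl ⟨har, hd'⟩
    · rw [← (Multiset.cons_inj_right r).1 (eq_cons_c.symm.trans h), hasEdgePacking_one_pair] at hd'
      exact .inr (.inl ⟨har, hd'⟩)
    · rw [← (Multiset.cons_inj_right r).1 (eq_cons_e.symm.trans h), hasEdgePacking_one_pair] at hd'
      exact .inr (.inr ⟨har, hd'⟩)
  · rintro (⟨hab, hce⟩ | ⟨hac, hbe⟩ | ⟨hae, hbc⟩)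
    · exact .inr ⟨b, _, hab, rfl, hasEdgePacking_one_pair.2 hce⟩
    · exact .inr ⟨c, _, hac, eq_cons_c, hasEdgePacking_one_pair.2 hbe⟩
    · exact .inr ⟨e, _, hae, eq_cons_e, hasEdgePacking_one_pair.2 hbc⟩

lemma exists_eq_cons_cons_cons_of_mem {p : V} (hd : ¬ HasEdgePacking Γ 2 d) (hp : p ∈ d)
    (hpd : HasEdgePacking Γ 2 (p ::ₘ d)) :
    ∃ r s d', Γ.Adj p r ∧ Γ.Adj p s ∧ d = p ::ₘ r ::ₘ s ::ₘ d' ∧ p ∉ d' := by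
  obtain ⟨r, d', hpr, rfl, hd'⟩ := (hasEdgePacking_succ_cons.1 hpd).resolve_left hd
  obtain ⟨d₁, rfl⟩ := Multiset.exists_cons_of_mem ((Multiset.mem_cons.1 hp).resolve_left hpr.ne)
  have hd₁ : ¬ HasEdgePacking Γ 1 d₁ := fun h => by
    rw [Multiset.cons_swap] at hd
    exact hd (.cons_cons hpr h)
  obtain ⟨s, d₂, hps, rfl⟩ := (hasEdgePacking_one_cons.1 hd').resolve_left hd₁
  refine ⟨r, s, d₂, hpr, hps, Multiset.cons_swap r p _, fun hp₂ => hd ?_⟩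
  obtain ⟨d₃, rfl⟩ := Multiset.exists_cons_of_mem hp₂
  rw [Multiset.cons_swap s p]
  exact .cons_cons hpr.symm (.cons_cons hps trivial)

lemma nodup_of_forall_mem_hasEdgePacking_cons (hd : ¬ HasEdgePacking Γ 2 d)
    (hcons : ∀ q ∈ d, HasEdgePacking Γ 2 (q ::ₘ d)) : d.Nodup := by
  rw [Multiset.nodup_iff_ne_cons_cons]
  rintro a d₁ rfl
  have ha := Multiset.mem_cons_self a (a ::ₘ d₁)
  obtain ⟨r, s, d', har, has, h, ha'⟩ := exists_eq_cons_cons_cons_of_mem hd ha (hcons a ha)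
  have : a ∈ r ::ₘ s ::ₘ d' := (Multiset.cons_inj_right a).1 h ▸ Multiset.mem_cons_self a d₁
  simp [har.ne, has.ne, ha'] at this

lemma exists_mem_mem_adj_of_forall_mem_hasEdgePacking_cons {u : V} (hd : ¬ HasEdgePacking Γ 2 d)
    (hcons : ∀ q ∈ d, HasEdgePacking Γ 2 (q ::ₘ d)) (hu : u ∈ d) :
    ∃ r ∈ d, ∃ s ∈ d, r ≠ s ∧ Γ.Adj u r ∧ Γ.Adj u s := by
  obtain ⟨r, s, d', hur, hus, h, -⟩ := exists_eq_cons_cons_cons_of_mem hd hu (hcons u hu)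
  have hnodup := nodup_of_forall_mem_hasEdgePacking_cons hd hcons
  refine ⟨r, by simp [h], s, by simp [h], ?_, hur, hus⟩
  rintro rfl
  simp [h] at hnodup

lemma exists_eq_triangle_of_forall_mem_hasEdgePacking_cons (hd : ¬ HasEdgePacking Γ 2 d)
    (hcons : ∀ q ∈ d, HasEdgePacking Γ 2 (q ::ₘ d)) (hne : d ≠ 0) :
    ∃ x y z, Γ.Adj x y ∧ Γ.Adj x z ∧ Γ.Adj y z ∧ d = {x, y, z} := by
  have exists_neighbors {u : V} (hu : u ∈ d) :=
    exists_mem_mem_adj_of_forall_mem_hasEdgePacking_cons hd hcons hu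
  obtain ⟨x, hx⟩ := Multiset.exists_mem_of_ne_zero hne
  obtain ⟨y, hy, z, hz, hyz_ne, hxy, hxz⟩ := exists_neighbors hx
  have hyz : Γ.Adj y z := by
    obtain ⟨a, ha, hya, hax⟩ : ∃ a ∈ d, Γ.Adj y a ∧ a ≠ x := by
      obtain ⟨a, ha, b, hb, hab, hya, hyb⟩ := exists_neighbors hy
      by_cases hax : a = x
      · exact ⟨b, hb, hyb, fun hbx => hab (hax.trans hbx.symm)⟩
      · exact ⟨a, ha, hya, hax⟩
    by_cases haz : a = z
    · rwa [haz] at hya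
    · exact absurd (.of_disjoint_edges hxz hya hx hz hy ha hxy.ne hax.symm hyz_ne.symm
        (Ne.symm haz)) hd
  have eq_of_mem (u : V) (hu : u ∈ d) : u = x ∨ u = y ∨ u = z := by
    by_contra! ⟨hux, huy, huz⟩
    obtain ⟨v, hv, -, -, -, huv, -⟩ := exists_neighbors hu
    by_cases hvx : v = x
    · exact hd (.of_disjoint_edges huv hyz hu hv hy hz huy huz (hvx ▸ hxy.ne) (hvx ▸ hxz.ne))
    by_cases hvy : v = y
    · exact hd (.of_disjoint_edges huv hxz hu hv hx hz hux huz hvx (hvy ▸ hyz.ne))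
    · exact hd (.of_disjoint_edges huv hxy hu hv hx hy hux huy hvx hvy)
  refine ⟨x, y, z, hxy, hxz, hyz, ?_⟩
  rw [Multiset.Nodup.ext (nodup_of_forall_mem_hasEdgePacking_cons hd hcons)
    (by simp [hxy.ne, hxz.ne, hyz.ne])]
  simp only [Multiset.insert_eq_cons, Multiset.mem_cons, Multiset.mem_singleton]
  refine fun u => ⟨eq_of_mem u, ?_⟩
  rintro (rfl | rfl | rfl) <;> assumption

lemma hasEdgePacking_two_cons_triangle {x y z u : V} (hxy : Γ.Adj x y) (hxz : Γ.Adj x z)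
    (hyz : Γ.Adj y z) :
    HasEdgePacking Γ 2 (u ::ₘ {x, y, z}) ↔ Γ.Adj u x ∨ Γ.Adj u y ∨ Γ.Adj u z := by
  refine hasEdgePacking_two_quadruple.trans ?_
  simp only [hxy, hxz, hyz, and_true]

lemma adj_of_hasEdgePacking_cons_cons_triangle {x y z p q : V} (hxy : Γ.Adj x y) (hxz : Γ.Adj x z)
    (hyz : Γ.Adj y z) (hp : ¬ HasEdgePacking Γ 2 (p ::ₘ {x, y, z}))
    (hq : ¬ HasEdgePacking Γ 2 (q ::ₘ {x, y, z}))
    (h : HasEdgePacking Γ 2 (q ::ₘ p ::ₘ {x, y, z})) : Γ.Adj p q := by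
  obtain ⟨r, d', hqr, h, -⟩ := (hasEdgePacking_succ_cons.1 h).resolve_left hp
  have hr : r ∈ p ::ₘ {x, y, z} := h ▸ Multiset.mem_cons_self r d'
  rw [hasEdgePacking_two_cons_triangle hxy hxz hyz] at hq
  rw [Multiset.mem_cons] at hr
  rcases hr with rfl | hr
  · exact hqr.symm
  · refine absurd ?_ hq
    simp only [Multiset.insert_eq_cons, Multiset.mem_cons, Multiset.mem_singleton] at hr
    rcases hr with rfl | rfl | rfl
    exacts [.inl hqr, .inr (.inl hqr), .inr (.inr hqr)]

lemma adj_and_exists_eq_cons_cons {p j : V} (hp : ¬ HasEdgePacking Γ 2 (p ::ₘ d))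
    (hj : ¬ HasEdgePacking Γ 2 (j ::ₘ d)) (hpd : p ∈ d)
    (h : HasEdgePacking Γ 2 (j ::ₘ p ::ₘ d)) :
    Γ.Adj p j ∧ ∃ s d', Γ.Adj p s ∧ d = p ::ₘ s ::ₘ d' := by
  obtain ⟨r, d', hjr, hd', hpack⟩ := (hasEdgePacking_succ_cons.1 h).resolve_left hp
  have not_pack_of_eq {r : V} {c : Multiset V} (hjr : Γ.Adj j r) (hd : d = r ::ₘ c) :
      ¬ HasEdgePacking Γ 1 c := fun hc => hj (hd ▸ .cons_cons hjr hc)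
  obtain ⟨rfl, rfl⟩ | ⟨hpr, c, rfl, rfl⟩ := Multiset.cons_eq_cons.1 hd'
  · obtain ⟨d₁, rfl⟩ := Multiset.exists_cons_of_mem hpd
    obtain ⟨s, d₂, hps, rfl⟩ :=
      (hasEdgePacking_one_cons.1 hpack).resolve_left (not_pack_of_eq hjr rfl)
    exact ⟨hjr.symm, s, d₂, hps, rfl⟩
  · obtain ⟨s, d₂, hps, rfl⟩ :=
      (hasEdgePacking_one_cons.1 hpack).resolve_left (not_pack_of_eq hjr rfl)
    have hp₂ : p ∈ d₂ := by simpa [hpr, hps.ne] using hpd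
    obtain ⟨d₃, rfl⟩ := Multiset.exists_cons_of_mem hp₂
    exact absurd (.cons_cons hps.symm trivial) (not_pack_of_eq hjr rfl)

end EdgePacking

section DominatingLollipop

variable {V : Type*} {Γ : SimpleGraph V} {d : Multiset V}

/-- `Γ` has a triangle `x y z` with a walk `x w i j` attached to it such that every vertex has a
neighbour among these six. The vertices `w`, `i`, `j` may coincide with earlier ones, so a shorter
tail is allowed. -/
def HasDominatingLollipop (Γ : SimpleGraph V) : Prop :=
  ∃ x y z w i j, Γ.Adj x y ∧ Γ.Adj x z ∧ Γ.Adj y z ∧ Γ.Adj x w ∧ Γ.Adj w i ∧ Γ.Adj i j ∧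
    ∀ v, Γ.Adj v x ∨ Γ.Adj v y ∨ Γ.Adj v z ∨ Γ.Adj v w ∨ Γ.Adj v i ∨ Γ.Adj v j

lemma HasDominatingLollipop.of_triangle {x y z w i j : V} (hxy : Γ.Adj x y) (hxz : Γ.Adj x z)
    (hyz : Γ.Adj y z) (hw : Γ.Adj w x ∨ Γ.Adj w y ∨ Γ.Adj w z) (hwi : Γ.Adj w i) (hij : Γ.Adj i j)
    (hdom : ∀ v, (Γ.Adj v x ∨ Γ.Adj v y ∨ Γ.Adj v z) ∨ Γ.Adj v w ∨ Γ.Adj v i ∨ Γ.Adj v j) :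
    HasDominatingLollipop Γ := by
  rcases hw with hwx | hwy | hwz
  · refine ⟨x, y, z, w, i, j, hxy, hxz, hyz, hwx.symm, hwi, hij, fun v => ?_⟩
    have := hdom v
    tauto
  · refine ⟨y, x, z, w, i, j, hxy.symm, hyz, hxz, hwy.symm, hwi, hij, fun v => ?_⟩
    have := hdom v
    tauto
  · refine ⟨z, x, y, w, i, j, hxz.symm, hyz.symm, hxy, hwz.symm, hwi, hij, fun v => ?_⟩
    have := hdom v
    tauto

lemma exists_adj_mem_iff_mem_of_not_colorable_two (hΓ : ¬ Γ.Colorable 2) (A : Set V) :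
    ∃ p q, Γ.Adj p q ∧ (p ∈ A ↔ q ∈ A) := by
  classical
  by_contra! h
  let color (v : V) : Fin 2 := if v ∈ A then 0 else 1
  refine hΓ ⟨SimpleGraph.Coloring.mk color fun {u v} huv => ?_⟩
  have := h u v huv
  by_cases hu : u ∈ A <;> by_cases hv : v ∈ A <;> simp_all [color]

/- If `y ∈ A`, every vertex outside `A` completes `x y` to a triangle; if `y ∉ A`, then `x`
dominates the complement of `A`, `y` dominates `A`, and an edge inside one part gives a triangle. -/
lemma hasDominatingLollipop_of_cut_edge (hΓ : ¬ Γ.Colorable 2) {A : Set V} {x y j : V}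
    (hxy : Γ.Adj x y) (hx : x ∈ A) (hj : j ∉ A)
    (hcut : ∀ p ∈ A, ∀ q ∉ A, HasEdgePacking Γ 2 (q ::ₘ p ::ₘ {x, y})) :
    HasDominatingLollipop Γ := by
  have adj_of_cut {p q : V} (hp : p ∈ A) (hq : q ∉ A) :
      Γ.Adj q p ∨ Γ.Adj q x ∧ Γ.Adj p y ∨ Γ.Adj q y ∧ Γ.Adj p x := by
    simpa only [hxy, and_true] using hasEdgePacking_two_quadruple.1 (hcut p hp q hq)
  have adj_x {q : V} (hq : q ∉ A) : Γ.Adj q x := by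
    simpa [hxy] using adj_of_cut hx hq
  by_cases hy : y ∈ A
  · have adj_y {q : V} (hq : q ∉ A) : Γ.Adj q y := by
      simpa [hxy.symm] using adj_of_cut hy hq
    refine .of_triangle hxy (adj_x hj).symm (adj_y hj).symm (.inl hxy.symm) hxy.symm hxy fun v => ?_
    by_cases hv : v ∈ A
    · have := adj_of_cut hv hj
      rw [Γ.adj_comm j v] at this
      tauto
    · exact .inl (.inl (adj_x hv))
  · have adj_y {p : V} (hp : p ∈ A) : Γ.Adj p y := by
      simpa [hxy.symm, Γ.adj_comm y p] using adj_of_cut hp hy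
    have adj_x_or_y (v : V) : Γ.Adj v x ∨ Γ.Adj v y := by
      by_cases hv : v ∈ A
      exacts [.inr (adj_y hv), .inl (adj_x hv)]
    obtain ⟨p, q, hpq, hmem⟩ := exists_adj_mem_iff_mem_of_not_colorable_two hΓ A
    by_cases hp : p ∈ A
    · exact .of_triangle (adj_y hp).symm (adj_y (hmem.1 hp)).symm hpq (.inl hxy) hxy hxy.symm
        fun v => .inr (by have := adj_x_or_y v; tauto)
    · exact .of_triangle (adj_x hp).symm (adj_x (mt hmem.2 hp)).symm hpq (.inl hxy.symm) hxy.symm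
        hxy fun v => .inr (by have := adj_x_or_y v; tauto)

lemma eq_zero_of_cut_of_cons_cons {A : Set V} {p s j : V} (hp : p ∈ A) (hj : j ∉ A)
    (hpj : Γ.Adj p j) (hps : Γ.Adj p s) (hpd : ¬ HasEdgePacking Γ 2 (p ::ₘ p ::ₘ s ::ₘ d))
    (hjd : ¬ HasEdgePacking Γ 2 (j ::ₘ p ::ₘ s ::ₘ d))
    (hcut : ∀ u ∈ A, ∀ v ∉ A, HasEdgePacking Γ 2 (v ::ₘ u ::ₘ p ::ₘ s ::ₘ d)) : d = 0 := by
  refine Multiset.eq_zero_of_forall_notMem fun u hu => ?_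
  obtain ⟨d₁, rfl⟩ := Multiset.exists_cons_of_mem hu
  have not_adj_p : ¬ Γ.Adj u p := fun hup =>
    hpd (.of_two_edges (d' := d₁) hps hup (by simp only [← Multiset.singleton_add]; abel))
  have not_adj_s : ¬ Γ.Adj u s := fun hus =>
    hjd (.of_two_edges (d' := d₁) hpj hus (by simp only [← Multiset.singleton_add]; abel))
  have not_adj_j : ¬ Γ.Adj u j := fun huj =>
    hjd (.of_two_edges (d' := d₁) hps huj (by simp only [← Multiset.singleton_add]; abel))
  have hd : ¬ HasEdgePacking Γ 2 (p ::ₘ s ::ₘ u ::ₘ d₁) := fun h => hpd (h.cons p)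
  by_cases hud : HasEdgePacking Γ 2 (u ::ₘ p ::ₘ s ::ₘ u ::ₘ d₁)
  · obtain ⟨r, d', hur, hr, -⟩ := (hasEdgePacking_succ_cons.1 hud).resolve_left hd
    have hrd₁ : r ∈ d₁ := by
      have : r ∈ p ::ₘ s ::ₘ u ::ₘ d₁ := hr ▸ Multiset.mem_cons_self r d'
      simp only [Multiset.mem_cons] at this
      rcases this with rfl | rfl | rfl | hrd₁
      exacts [absurd hur not_adj_p, absurd hur not_adj_s, absurd hur Γ.irrefl, hrd₁]
    obtain ⟨d₂, rfl⟩ := Multiset.exists_cons_of_mem hrd₁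
    exact hd (.of_two_edges hps hur rfl)
  by_cases huA : u ∈ A
  · exact not_adj_j (adj_and_exists_eq_cons_cons hud hjd (by simp) (hcut u huA j hj)).1
  · exact not_adj_p (adj_and_exists_eq_cons_cons hpd hud (by simp) (hcut p hp u huA)).1.symm

lemma hasDominatingLollipop_of_cut_of_mem (hΓ : ¬ Γ.Colorable 2) {A : Set V} {p j : V}
    (hp : p ∈ A) (hj : j ∉ A) (hmem : p ∈ d) (hpd : ¬ HasEdgePacking Γ 2 (p ::ₘ d))
    (hjd : ¬ HasEdgePacking Γ 2 (j ::ₘ d))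
    (hcut : ∀ u ∈ A, ∀ v ∉ A, HasEdgePacking Γ 2 (v ::ₘ u ::ₘ d)) : HasDominatingLollipop Γ := by
  obtain ⟨hpj, s, d', hps, rfl⟩ := adj_and_exists_eq_cons_cons hpd hjd hmem (hcut p hp j hj)
  obtain rfl := eq_zero_of_cut_of_cons_cons hp hj hpj hps hpd hjd hcut
  exact hasDominatingLollipop_of_cut_edge hΓ hps hp hj hcut

lemma hasDominatingLollipop_of_cut_triangle (hΓ : Γ.Preconnected) {A : Set V} {x y z p j : V}
    (hxy : Γ.Adj x y) (hxz : Γ.Adj x z) (hyz : Γ.Adj y z) (hp : p ∈ A) (hj : j ∉ A)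
    (hpd : ¬ HasEdgePacking Γ 2 (p ::ₘ {x, y, z})) (hjd : ¬ HasEdgePacking Γ 2 (j ::ₘ {x, y, z}))
    (hcut : ∀ u ∈ A, ∀ v ∉ A, HasEdgePacking Γ 2 (v ::ₘ u ::ₘ {x, y, z})) :
    HasDominatingLollipop Γ := by
  let N : Set V := {u | Γ.Adj u x ∨ Γ.Adj u y ∨ Γ.Adj u z}
  have pack_iff (u : V) : HasEdgePacking Γ 2 (u ::ₘ {x, y, z}) ↔ u ∈ N :=
    hasEdgePacking_two_cons_triangle hxy hxz hyz
  rw [pack_iff] at hpd hjd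
  have adj_of_cut {u v : V} (hu : u ∈ A) (hv : v ∉ A) (huN : u ∉ N) (hvN : v ∉ N) : Γ.Adj u v :=
    adj_of_hasEdgePacking_cons_cons_triangle hxy hxz hyz (mt (pack_iff u).1 huN)
      (mt (pack_iff v).1 hvN) (hcut u hu v hv)
  obtain ⟨w, i, hw, hi, hwi⟩ : ∃ w i, w ∈ N ∧ i ∉ N ∧ Γ.Adj w i := by
    obtain ⟨walk⟩ := hΓ x p
    obtain ⟨e, -, hfst, hsnd⟩ := walk.exists_boundary_dart N (.inr (.inl hxy)) hpd
    exact ⟨e.fst, e.snd, hfst, hsnd, e.adj⟩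
  obtain ⟨j', hij', hdom⟩ : ∃ j', Γ.Adj i j' ∧ ∀ u ∉ N, Γ.Adj u i ∨ Γ.Adj u j' := by
    by_cases hiA : i ∈ A
    · refine ⟨j, adj_of_cut hiA hj hi hjd, fun u hu => ?_⟩
      by_cases huA : u ∈ A
      exacts [.inr (adj_of_cut huA hj hu hjd), .inl (adj_of_cut hiA huA hi hu).symm]
    · refine ⟨p, (adj_of_cut hp hiA hpd hi).symm, fun u hu => ?_⟩
      by_cases huA : u ∈ A
      exacts [.inl (adj_of_cut huA hiA hu hi), .inr (adj_of_cut hp huA hpd hu).symm]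
  exact .of_triangle hxy hxz hyz hw hwi hij' fun v =>
    or_iff_not_imp_left.2 fun hv => .inr (hdom v hv)

lemma hasDominatingLollipop_of_cut (hconn : Γ.Preconnected) (hΓ : ¬ Γ.Colorable 2) {A : Set V}
    {p j : V} (hp : p ∈ A) (hj : j ∉ A) (hpd : ¬ HasEdgePacking Γ 2 (p ::ₘ d))
    (hjd : ¬ HasEdgePacking Γ 2 (j ::ₘ d))
    (hcut : ∀ u ∈ A, ∀ v ∉ A, HasEdgePacking Γ 2 (v ::ₘ u ::ₘ d)) : HasDominatingLollipop Γ := by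
  by_cases h : ∀ u ∈ d, HasEdgePacking Γ 2 (u ::ₘ d)
  · have hne : d ≠ 0 := by
      rintro rfl
      simpa using (hcut p hp j hj).two_mul_le_card
    obtain ⟨x, y, z, hxy, hxz, hyz, rfl⟩ :=
      exists_eq_triangle_of_forall_mem_hasEdgePacking_cons (fun hd => hpd (hd.cons p)) h hne
    exact hasDominatingLollipop_of_cut_triangle hconn hxy hxz hyz hp hj hpd hjd hcut
  · push Not at h
    obtain ⟨u, hu, hud⟩ := h
    by_cases huA : u ∈ A
    · exact hasDominatingLollipop_of_cut_of_mem hΓ huA hj hu hud hjd hcut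
    · refine hasDominatingLollipop_of_cut_of_mem (A := Aᶜ) hΓ huA (not_not.2 hp) hu hud hpd ?_
      intro a ha b hb
      rw [Multiset.cons_swap]
      exact hcut b (not_not.1 hb) a ha

lemma hasDominatingLollipop_of_forall_ne_or_mem {v w : V} (hvw : Γ.Adj v w)
    (hd : ¬ HasEdgePacking Γ 2 d) (h : ∀ u, u ≠ v ∨ u ∈ d → HasEdgePacking Γ 2 (u ::ₘ d)) :
    HasDominatingLollipop Γ := by
  have hne : d ≠ 0 := by
    rintro rfl
    simpa using (h w (.inl hvw.ne')).two_mul_le_card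
  obtain ⟨x, y, z, hxy, hxz, hyz, rfl⟩ :=
    exists_eq_triangle_of_forall_mem_hasEdgePacking_cons hd (fun u hu => h u (.inr hu)) hne
  have adj_of_ne {u : V} (hu : u ≠ v) : Γ.Adj u x ∨ Γ.Adj u y ∨ Γ.Adj u z :=
    (hasEdgePacking_two_cons_triangle hxy hxz hyz).1 (h u (.inl hu))
  refine .of_triangle hxy hxz hyz (adj_of_ne hvw.ne') hvw.symm hvw fun u => ?_
  obtain rfl | hu := eq_or_ne u v
  exacts [.inr (.inl hvw), .inl (adj_of_ne hu)]

lemma HasDominatingLollipop.exists_card_eq_nine (h : HasDominatingLollipop Γ) :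
    ∃ d : Multiset V, d.card = 9 ∧ ∀ v, HasEdgePacking Γ 5 (v ::ₘ d) := by
  obtain ⟨x, y, z, w, i, j, hxy, hxz, hyz, hxw, hwi, hij, hdom⟩ := h
  refine ⟨{x, x, y, z, w, w, i, i, j}, rfl, fun v => ?_⟩
  have pack {u a b c e f g p q : V} (hvu : Γ.Adj v u) (hab : Γ.Adj a b) (hce : Γ.Adj c e)
      (hfg : Γ.Adj f g) (hpq : Γ.Adj p q)
      (heq : v ::ₘ {x, x, y, z, w, w, i, i, j} = v ::ₘ u ::ₘ a ::ₘ b ::ₘ c ::ₘ e ::ₘ f ::ₘ g ::ₘ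
        p ::ₘ q ::ₘ 0) :
      HasEdgePacking Γ 5 (v ::ₘ {x, x, y, z, w, w, i, i, j}) :=
    heq ▸ .cons_cons hvu (.cons_cons hab (.cons_cons hce (.cons_cons hfg (.cons_cons hpq trivial))))
  simp only [Multiset.insert_eq_cons, ← Multiset.singleton_add, add_zero] at pack ⊢
  rcases hdom v with hvx | hvy | hvz | hvw | hvi | hvj
  · exact pack hvx hyz hxw hwi hij (by abel)
  · exact pack hvy hxz hxw hwi hij (by abel)
  · exact pack hvz hxy hxw hwi hij (by abel)
  · exact pack hvw hxy hxz hwi hij (by abel)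
  · exact pack hvi hyz hxw hxw hij (by abel)
  · exact pack hvj hxy hxz hwi hwi (by abel)

lemma HasDominatingLollipop.exists_not_hasEdgePacking (h : HasDominatingLollipop Γ) {t : ℕ}
    (ht : 5 ≤ t) :
    ∃ d : Multiset V, ¬ HasEdgePacking Γ t d ∧ ∀ v, HasEdgePacking Γ t (v ::ₘ d) := by
  obtain ⟨d, hcard, hd⟩ := h.exists_card_eq_nine
  obtain ⟨x, y, -, -, -, -, hxy, -⟩ := h
  obtain ⟨n, rfl⟩ := Nat.exists_eq_add_of_le ht
  refine ⟨d + n • {x, y}, fun hpack => ?_, fun v => ?_⟩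
  · have := hpack.two_mul_le_card
    simp only [Multiset.card_add, hcard, Multiset.card_nsmul, Multiset.card_pair] at this
    lia
  · rw [← Multiset.cons_add]
    exact (hd v).add (.nsmul_pair hxy n)

end DominatingLollipop

section EdgeIdeal

lemma toMultiset_add_single_one {V : Type*} (b : V →₀ ℕ) (v : V) :
    (b + Finsupp.single v 1).toMultiset = v ::ₘ b.toMultiset := by
  rw [map_add, Finsupp.toMultiset_single, one_nsmul, add_comm, Multiset.singleton_add]

lemma isUpperSet_setOf_hasEdgePacking {V : Type*} (Γ : SimpleGraph V) (t : ℕ) :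
    IsUpperSet {b : V →₀ ℕ | HasEdgePacking Γ t b.toMultiset} :=
  fun _ _ hle hb => hb.mono (Finsupp.toMultiset_strictMono.monotone hle)

lemma prod_map_X_toMultiset {σ A : Type*} [CommSemiring A] (b : σ →₀ ℕ) :
    (b.toMultiset.map X).prod = (monomial b 1 : MvPolynomial σ A) := by
  rw [Finsupp.toMultiset_map, Finsupp.prod_toMultiset, Finsupp.prod_mapDomain_index, monomial_eq,
    C_1, one_mul]
  exacts [fun _ => pow_zero _, fun _ => pow_add _]

variable {k : Type} [Field k] {σ : Type} {Γ : SimpleGraph σ} {t : ℕ}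

lemma prod_map_X_mem_edgeIdeal_pow {d : Multiset σ} (hd : HasEdgePacking Γ t d) :
    (d.map X).prod ∈ edgeIdeal k Γ ^ t := by
  induction t generalizing d with
  | zero => rw [pow_zero, Ideal.one_eq_top]; exact Submodule.mem_top
  | succ t ih =>
    obtain ⟨i, j, d, hij, rfl, hd⟩ := hd
    rw [Multiset.map_cons, Multiset.map_cons, Multiset.prod_cons, Multiset.prod_cons, ← mul_assoc,
      pow_succ']
    exact Ideal.mul_mem_mul (Ideal.subset_span ⟨i, j, hij, rfl⟩) (ih hd)

lemma edgeIdeal_le_restrictSupportIdeal :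
    edgeIdeal k Γ ≤ restrictSupportIdeal k {b | HasEdgePacking Γ 1 b.toMultiset}
      (isUpperSet_setOf_hasEdgePacking Γ 1) := by
  rw [edgeIdeal, Ideal.span_le]
  rintro _ ⟨i, j, hij, rfl⟩
  refine mem_restrictSupportIdeal_iff.2 fun b hb => ?_
  rw [X, X, monomial_mul] at hb
  obtain rfl := Finset.mem_singleton.1 (support_monomial_subset hb)
  rw [Set.mem_ofPred_eq, add_comm, toMultiset_add_single_one, Finsupp.toMultiset_single,
    one_nsmul]
  exact .cons_cons hij trivial

lemma edgeIdeal_pow_eq_restrictSupportIdeal (k : Type) [Field k] (Γ : SimpleGraph σ) (t : ℕ) :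
    edgeIdeal k Γ ^ t = restrictSupportIdeal k {b | HasEdgePacking Γ t b.toMultiset}
      (isUpperSet_setOf_hasEdgePacking Γ t) := by
  classical
  refine le_antisymm ?_ fun p hp => ?_
  · induction t with
    | zero => exact fun _ _ _ _ => trivial
    | succ t ih =>
      rw [pow_succ]
      refine Ideal.mul_le.2 fun p hp q hq => mem_restrictSupportIdeal_iff.2 fun b hb => ?_
      obtain ⟨c, hc, e, he, rfl⟩ := Finset.mem_add.1 (support_mul p q hb)
      rw [Set.mem_ofPred_eq, map_add]
      exact (mem_restrictSupportIdeal_iff.1 (ih hp) c hc).add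
        (mem_restrictSupportIdeal_iff.1 (edgeIdeal_le_restrictSupportIdeal hq) e he)
  · rw [p.as_sum]
    refine Ideal.sum_mem _ fun b hb => ?_
    rw [← mul_one (coeff b p), ← C_mul_monomial, ← prod_map_X_toMultiset]
    exact Ideal.mul_mem_left _ _ (prod_map_X_mem_edgeIdeal_pow (hp hb))

lemma ker_constantCoeff_eq_maxIdeal :
    RingHom.ker (constantCoeff : MvPolynomial σ k →+* k) = maxIdeal k σ := by
  ext p
  rw [maxIdeal, ← Set.image_univ, mem_ideal_span_X_image, RingHom.mem_ker, constantCoeff_eq,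
    ← notMem_support_iff]
  refine ⟨fun h m hm => ?_, fun h hm => ?_⟩
  · obtain ⟨i, hi⟩ := Finsupp.ne_iff.1 (ne_of_mem_of_not_mem hm h)
    exact ⟨i, trivial, hi⟩
  · obtain ⟨i, -, hi⟩ := h 0 hm
    exact hi rfl

lemma isMaximal_maxIdeal : (maxIdeal k σ).IsMaximal := by
  rw [← ker_constantCoeff_eq_maxIdeal]
  exact RingHom.ker_isMaximal_of_surjective _ fun c => ⟨C c, constantCoeff_C σ c⟩

lemma depthZero_of_X_mul_mem [Finite σ] {J : Ideal (MvPolynomial σ k)} {f : MvPolynomial σ k}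
    (hf : f ∉ J) (hXf : ∀ v, X v * f ∈ J) : DepthZero k J := by
  have hmax := isMaximal_maxIdeal (k := k) (σ := σ)
  rw [DepthZero, AssociatedPrimes.mem_iff, isAssociatedPrime_iff]
  refine ⟨hmax.isPrime, Ideal.Quotient.mk J f, hmax.eq_of_le ?_ (Ideal.span_le.2 ?_)⟩
  · rwa [Ne, Ideal.eq_top_iff_one, Submodule.mem_colon_singleton, one_smul, Submodule.mem_bot,
      Ideal.Quotient.eq_zero_iff_mem]
  · rintro _ ⟨v, rfl⟩
    rw [SetLike.mem_coe, Submodule.mem_colon_singleton, Submodule.mem_bot]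
    exact Ideal.Quotient.eq_zero_iff_mem.2 (hXf v)

lemma HasDominatingLollipop.depthZero_edgeIdeal_pow [Finite σ] (h : HasDominatingLollipop Γ)
    (ht : 5 ≤ t) : DepthZero k (edgeIdeal k Γ ^ t) := by
  classical
  obtain ⟨d, hd, hcons⟩ := h.exists_not_hasEdgePacking ht
  refine depthZero_of_X_mul_mem (f := (d.map X).prod) (fun hmem => hd ?_) fun v => ?_
  · rw [← Multiset.toFinsupp_toMultiset d, prod_map_X_toMultiset,
      edgeIdeal_pow_eq_restrictSupportIdeal, mem_restrictSupportIdeal_iff] at hmem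
    simpa using hmem d.toFinsupp (by simp)
  · rw [← Multiset.prod_cons, ← Multiset.map_cons]
    exact prod_map_X_mem_edgeIdeal_pow (hcons v)

lemma subsingleton_locCoh_one_edgeIdeal_sq [Finite σ] (hconn : Γ.Connected)
    (hnb : ¬ Γ.Colorable 2) (h : ¬ HasDominatingLollipop Γ) :
    Subsingleton (locCoh k (edgeIdeal k Γ ^ 2) 1) := by
  obtain ⟨p, q, hpq, -⟩ := exists_adj_mem_iff_mem_of_not_colorable_two hnb ∅
  have : Nontrivial σ := ⟨p, q, hpq.ne⟩
  rw [edgeIdeal_pow_eq_restrictSupportIdeal]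
  refine subsingleton_localCohomology_one fun t => BaerAt.pow
    (baerAt_idealOfVars (fun b U i hi j hj hbi hbj => ?_) fun v d hdv hlink => ?_)
    (eq_zero_of_idealOfVars_smul_eq_zero fun d hsocle => ?_) t
  · by_contra! hcut
    simp only [Set.mem_ofPred_eq, toMultiset_add_single_one] at hbi hbj hcut
    exact h (hasDominatingLollipop_of_cut hconn.preconnected hnb hi hj hbi hbj hcut)
  · by_contra hd
    simp only [Set.mem_ofPred_eq, toMultiset_add_single_one] at hlink
    obtain ⟨w, hvw⟩ := hconn.preconnected.exists_adj_of_nontrivial v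
    refine h (hasDominatingLollipop_of_forall_ne_or_mem hvw hd fun u hu => hlink u ?_)
    rcases hu with hu | hu
    · exact hu
    · rintro rfl
      exact Finsupp.mem_support_iff.1 (Finsupp.mem_toMultiset d u |>.1 hu) hdv
  · by_contra hd
    simp only [Set.mem_ofPred_eq, toMultiset_add_single_one] at hsocle
    exact h (hasDominatingLollipop_of_forall_ne_or_mem hpq hd fun u _ => hsocle u)

lemma nontrivial_locCoh_one_of_rDepth_eq_one {J : Ideal (MvPolynomial σ k)}
    (h : rDepth k J = 1) : Nontrivial (locCoh k J 1) := by
  have hmem : rDepth k J ∈ {i | Nontrivial (locCoh k J i)} :=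
    Nat.sInf_mem (Nat.nonempty_of_sInf_eq_succ h)
  rwa [h] at hmem

end EdgeIdeal

theorem stmt16_general (k : Type) [Field k] {σ : Type} [Finite σ] (Γ : SimpleGraph σ)
    (hconn : Γ.Connected) (hnb : ¬ Γ.Colorable 2)
    (h : Nontrivial (locCoh k (edgeIdeal k Γ ^ 2) 1)) {t : ℕ} (ht : 5 ≤ t) :
    DepthZero k (edgeIdeal k Γ ^ t) := by
  refine HasDominatingLollipop.depthZero_edgeIdeal_pow ?_ ht
  by_contra hlollipop
  have := subsingleton_locCoh_one_edgeIdeal_sq (k := k) hconn hnb hlollipop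
  exact not_nontrivial _ h

/-- Let `Γ` be a connected non-bipartite graph. If `depth R/I^2 = 1`,
then `depth R/I^5 = 0`, i.e. the maximal graded ideal is an associated prime of
`R/I^5`. -/
theorem stmt16 (k : Type) [Field k] (n : ℕ) (Γ : SimpleGraph (Fin n))
    (hiso : NoIsolated Γ) (hconn : Γ.Connected) (hnb : ¬ Γ.Colorable 2)
    (h : rDepth k ((edgeIdeal k Γ) ^ 2) = 1) :
    DepthZero k ((edgeIdeal k Γ) ^ 5) :=
  stmt16_general k Γ hconn hnb (nontrivial_locCoh_one_of_rDepth_eq_one h) le_rfl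

end
end
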